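/- arXiv:1812.10819 — 2 statements merged into one kernel-verified Lean document; each statement's English description precedes it below -/
import Mathlib

section
/- Let k be a Hilbertian field. Then every finite embedding problem over k has a solution. Explicitly: for every finite group G, finite separable extension L/k, and surjective group homomorphism α : G → Aut(L/k), there exist a finite separable extension E/k with L ⊆ E and an isomorphism β : Aut(E/k) → G such that every σ ∈ Aut(E/k) maps L onto itself and σ|_L = α(β(σ)). -/
set_option synthInstance.maxHeartbeats 1000000
set_option maxHeartbeats 1000000

/-- A field `k` is *Hilbertian* if for every `n ≥ 1`, every finite collection of
polynomials `f i ∈ k[T₁,…,Tₙ][X]`, each irreducible and separable as a polynomial in `X`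
over the rational function field `k(T₁,…,Tₙ)`, and every nonzero `g ∈ k[T₁,…,Tₙ]`,
there is `t ∈ kⁿ` with `g t ≠ 0` such that each specialized polynomial `f i (t, X)` is
irreducible over `k` and separable. -/
def IsHilbertianField (k : Type) [Field k] : Prop :=
  ∀ (n : ℕ), 0 < n → ∀ (m : ℕ)
    (f : Fin m → Polynomial (MvPolynomial (Fin n) k))
    (g : MvPolynomial (Fin n) k), g ≠ 0 →
    (∀ i, Irreducible ((f i).map (algebraMap (MvPolynomial (Fin n) k)
          (FractionRing (MvPolynomial (Fin n) k)))) ∧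
        ((f i).map (algebraMap (MvPolynomial (Fin n) k)
          (FractionRing (MvPolynomial (Fin n) k)))).Separable) →
    ∃ t : Fin n → k, MvPolynomial.eval t g ≠ 0 ∧
      ∀ i, Irreducible ((f i).map (MvPolynomial.eval t)) ∧
        ((f i).map (MvPolynomial.eval t)).Separable

/-!
Noether's trick realizes the embedding problem over a rational function field. Let `G` act on
`E = L(X_g : g ∈ G)`, by translation on the variables and through `α` on the coefficients. This
embeds `G` into `Gal(E/K)`, where `K = k(e₁, …, eₙ)` is generated by the elementary symmetric
polynomials and is purely transcendental over `k`.

The fixed field of `G` in `E` is in general larger than `K` and need not be rational over `k`. Write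
it as `K(ω)` with `ω ≠ 0, 1`, pass to `E(T)`, and put `u = T (T - 1)² (T - ω)³`. An automorphism of
`E(T)` over `K` maps `E` to `E`; if it fixes `u`, then it maps `T` to a polynomial, and comparing
the multiplicities of the roots of `u` shows that it fixes `T` and `ω`. Hence
`Gal(E(T)/K(u)) = Gal(E/K(ω)) = G`, and `K(u)` is purely transcendental over `k`. The extension
`E(T)/K(u)` is usually not normal, but only its automorphism group matters.

Hilbertianity provides a `k`-point of the polynomial ring in `K(u)` at which the minimal polynomial
of a primitive element of the normal closure stays irreducible and separable, so that a residue
field there is Galois over `k` with the same group as the normal closure. Automorphism groups of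
intermediate fields are computed inside that group, as the normalizer of the fixing subgroup modulo
the fixing subgroup, and are therefore preserved, as are the algebraic constants `L`.
-/

open Polynomial IntermediateField
open scoped Pointwise

universe u w

/-! ### Specialization of Galois groups -/

/-- The specialization property of a `k`-algebra `A` that plays the role of Hilbert's irreducibility
theorem: some `k`-point `ev` of `A`, which may be required to avoid the zeros of a given `d ≠ 0`,
preserves irreducibility and separability of a given monic polynomial over `A`. For a polynomial
that is irreducible over the fraction field of `A`, nonvanishing of the derivative is
separability. -/
def HasIrreducibleSpecializations (k A : Type*) [Field k] [CommRing A] [Algebra k A] : Prop :=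
  ∀ f : A[X], f.Monic → Irreducible f → derivative f ≠ 0 → ∀ d : A, d ≠ 0 →
    ∃ ev : A →ₐ[k] k, ev d ≠ 0 ∧ Irreducible (f.map (ev : A →+* k)) ∧
      (f.map (ev : A →+* k)).Separable

theorem HasIrreducibleSpecializations.of_algEquiv {k A B : Type*} [Field k] [CommRing A]
    [CommRing B] [Algebra k A] [Algebra k B] (e : A ≃ₐ[k] B)
    (hA : HasIrreducibleSpecializations k A) : HasIrreducibleSpecializations k B := by
  intro f hf hirr hder d hd
  let ε : B[X] ≃+* A[X] := mapEquiv e.symm.toRingEquiv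
  have hεder : derivative (ε f) ≠ 0 := by
    change derivative (f.map (e.symm : B →+* A)) ≠ 0
    rwa [derivative_map, Ne, Polynomial.map_eq_zero_iff e.symm.injective]
  obtain ⟨ev, hd, hirr, hsep⟩ := hA (ε f) (hf.map _) ((MulEquiv.irreducible_iff ε).2 hirr) hεder
    (e.symm d) (by simpa using hd)
  have map_eq : (ε f).map (ev : A →+* k) = f.map (ev.comp e.symm.toAlgHom : B →+* k) :=
    Polynomial.map_map ..
  exact ⟨ev.comp e.symm.toAlgHom, hd, map_eq ▸ hirr, map_eq ▸ hsep⟩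

theorem IsHilbertianField.hasIrreducibleSpecializations_mvPolynomial {k : Type} [Field k]
    (hk : IsHilbertianField k) {n : ℕ} (hn : 0 < n) :
    HasIrreducibleSpecializations k (MvPolynomial (Fin n) k) := by
  intro f hf hirr hder d hd
  let F := FractionRing (MvPolynomial (Fin n) k)
  have hirr' : Irreducible (f.map (algebraMap _ F)) :=
    hf.irreducible_iff_irreducible_map_fraction_map.1 hirr
  have hsep' : (f.map (algebraMap _ F)).Separable := by
    rwa [separable_iff_derivative_ne_zero hirr', derivative_map, Ne,
      Polynomial.map_eq_zero_iff (IsFractionRing.injective _ F)]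
  obtain ⟨t, hdt, hft⟩ := hk n hn 1 (fun _ ↦ f) d hd fun _ ↦ ⟨hirr', hsep'⟩
  have coe_aeval : (MvPolynomial.aeval t : MvPolynomial (Fin n) k →ₐ[k] k) =
      (MvPolynomial.eval t : MvPolynomial (Fin n) k →+* k) :=
    MvPolynomial.coe_aeval_eq_eval t
  exact ⟨MvPolynomial.aeval t, by simpa [MvPolynomial.aeval_eq_eval] using hdt,
    by rw [coe_aeval]; exact hft 0⟩

section ResidueField

variable {k A C : Type*} [Field k] [CommRing A] [Algebra k A] [CommRing C] [Algebra A C]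
  [Algebra k C] [IsScalarTower k A C]

attribute [local instance] Ideal.Quotient.field

variable (ev : A →ₐ[k] k) (Q : Ideal C) [Q.LiesOver (RingHom.ker ev)]

theorem mk_algebraMap_eq_algebraMap (a : A) :
    Ideal.Quotient.mk Q (algebraMap A C a) = algebraMap k (C ⧸ Q) (ev a) := by
  rw [IsScalarTower.algebraMap_apply k C (C ⧸ Q), Ideal.Quotient.algebraMap_eq,
    IsScalarTower.algebraMap_apply k A C, Ideal.Quotient.eq, ← map_sub, ← Ideal.mem_comap,
    ← Ideal.under_def, ← Q.over_def (RingHom.ker ev), RingHom.mem_ker, map_sub, ev.commutes,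
    Algebra.algebraMap_self_apply, sub_self]

theorem aeval_mk_map (f : A[X]) (c : C) :
    aeval (Ideal.Quotient.mk Q c) (f.map (ev : A →+* k)) = Ideal.Quotient.mk Q (aeval c f) := by
  rw [aeval_def, eval₂_map, aeval_def, hom_eval₂]
  congr 1
  ext a
  exact (mk_algebraMap_eq_algebraMap ev Q a).symm

theorem adjoin_mk_eq_top [Q.IsMaximal] {b : C} {d : A} (hd : ev d ≠ 0)
    (hdC : ∀ c : C, d • c ∈ Algebra.adjoin A {b}) : k⟮Ideal.Quotient.mk Q b⟯ = ⊤ := by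
  have mk_mem : ∀ c ∈ Algebra.adjoin A {b},
      Ideal.Quotient.mk Q c ∈ k⟮Ideal.Quotient.mk Q b⟯ := by
    intro c hc
    obtain ⟨p, rfl⟩ := Algebra.adjoin_singleton_eq_range_aeval A b ▸ hc
    exact aeval_mk_map ev Q p b ▸ algebra_adjoin_le_adjoin k _ (aeval_mem_adjoin_singleton k _)
  refine eq_top_iff.2 fun x _ ↦ ?_
  obtain ⟨c, rfl⟩ := Ideal.Quotient.mk_surjective x
  have hdc := mk_mem _ (hdC c)
  rw [Algebra.smul_def, map_mul, mk_algebraMap_eq_algebraMap ev, ← Algebra.smul_def] at hdc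
  simpa [hd] using (k⟮Ideal.Quotient.mk Q b⟯).smul_mem hdc (x := (ev d)⁻¹)

theorem algebraMap_quotient_ker_surjective :
    Function.Surjective (algebraMap k (A ⧸ RingHom.ker ev)) := by
  have : (RingHom.ker ev).LiesOver (RingHom.ker ev) := ⟨rfl⟩
  intro x
  obtain ⟨a, rfl⟩ := Ideal.Quotient.mk_surjective x
  exact ⟨ev a, (mk_algebraMap_eq_algebraMap (C := A) ev (RingHom.ker ev) a).symm⟩

variable (Γ : Type*) [Group Γ] [MulSemiringAction Γ C]

include ev in
theorem normal_quotient_of_isInvariant [Finite Γ] [Algebra.IsInvariant A C Γ] [Q.IsMaximal] :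
    Normal k (C ⧸ Q) := by
  have : (RingHom.ker ev).IsMaximal :=
    RingHom.ker_isMaximal_of_surjective ev fun x ↦ ⟨algebraMap k A x, ev.commutes x⟩
  have := Ideal.Quotient.normal Γ (RingHom.ker ev) Q
  let e : k ≃ₐ[k] A ⧸ RingHom.ker ev := .ofBijective (Algebra.ofId _ _)
    ⟨(algebraMap k _).injective, algebraMap_quotient_ker_surjective ev⟩
  refine Normal.of_equiv_equiv (f := e.symm.toRingEquiv) (g := .refl (C ⧸ Q)) ?_
  refine RingHom.ext fun x ↦ ?_
  obtain ⟨y, rfl⟩ := e.surjective x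
  exact (congrArg (algebraMap k (C ⧸ Q)) (e.symm_apply_apply y)).trans
    (IsScalarTower.algebraMap_apply k (A ⧸ RingHom.ker ev) (C ⧸ Q) y)

variable [SMulCommClass Γ A C]

/-- The action of the decomposition group of `Q` on the residue field `C ⧸ Q`. It is `k`-linear
because `k` is the residue field of `A` at the kernel of the `k`-point `ev`. -/
noncomputable def stabilizerResidueHom : MulAction.stabilizer Γ Q →* Gal((C ⧸ Q)/k) :=
  (AlgEquiv.restrictScalarsHom k).comp (Ideal.Quotient.stabilizerHom Q (RingHom.ker ev) Γ)

theorem stabilizerResidueHom_surjective [Finite Γ] [Algebra.IsInvariant A C Γ] [Q.IsPrime] :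
    Function.Surjective (stabilizerResidueHom ev Q Γ) := by
  intro τ
  obtain ⟨γ, hγ⟩ := Ideal.Quotient.stabilizerHom_surjective Γ (RingHom.ker ev) Q
    (AlgEquiv.extendScalarsOfSurjective (algebraMap_quotient_ker_surjective ev) τ)
  refine ⟨γ, ?_⟩
  rw [stabilizerResidueHom, MonoidHom.comp_apply, hγ]
  rfl

variable {Γ}

theorem exists_galEquiv_quotient [Finite Γ] [Algebra.IsInvariant A C Γ] [Q.IsMaximal]
    {b : C} (hb : k⟮Ideal.Quotient.mk Q b⟯ = ⊤) {f : A[X]} (hf : f.Monic) (hfb : aeval b f = 0)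
    (hdeg : f.natDegree = Nat.card Γ) (hirr : Irreducible (f.map (ev : A →+* k)))
    (hsep : (f.map (ev : A →+* k)).Separable) :
    FiniteDimensional k (C ⧸ Q) ∧ IsGalois k (C ⧸ Q) ∧ ∃ θ : Γ ≃* Gal((C ⧸ Q)/k), ∀ γ c,
      θ γ (Ideal.Quotient.mk Q c) = Ideal.Quotient.mk Q (γ • c) := by
  have hmin : minpoly k (Ideal.Quotient.mk Q b) = f.map (ev : A →+* k) :=
    (minpoly.eq_of_irreducible_of_monic hirr (by rw [aeval_mk_map, hfb, map_zero]) (hf.map _)).symm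
  have hbsep : IsSeparable k (Ideal.Quotient.mk Q b) := by rwa [IsSeparable, hmin]
  have finrank_eq : Module.finrank k (C ⧸ Q) = Nat.card Γ := by
    rw [← finrank_top', ← hb, adjoin.finrank hbsep.isIntegral, hmin, hf.natDegree_map, hdeg]
  have hfin : FiniteDimensional k (C ⧸ Q) := .of_finrank_pos (finrank_eq ▸ Nat.card_pos)
  have : Algebra.IsSeparable k (C ⧸ Q) := by
    rw [← separableClosure.eq_top_iff, eq_top_iff, ← hb, adjoin_simple_le_iff]
    exact hbsep
  have hgal : IsGalois k (C ⧸ Q) := { __ := normal_quotient_of_isInvariant ev Q Γ }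
  have hsurj := stabilizerResidueHom_surjective ev Q Γ
  have hstab : MulAction.stabilizer Γ Q = ⊤ := by
    refine Subgroup.eq_top_of_le_card _ ?_
    rw [← finrank_eq, ← IsGalois.card_aut_eq_finrank]
    exact Nat.card_le_card_of_surjective _ hsurj
  let e : Γ ≃* MulAction.stabilizer Γ Q :=
    Subgroup.topEquiv.symm.trans (MulEquiv.subgroupCongr hstab.symm)
  refine ⟨hfin, hgal, e.trans (.ofBijective (stabilizerResidueHom ev Q Γ) ?_), fun γ c ↦ rfl⟩
  refine (Nat.bijective_iff_surjective_and_card _).2 ⟨hsurj, ?_⟩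
  rw [IsGalois.card_aut_eq_finrank, finrank_eq, Nat.card_congr e.toEquiv]

end ResidueField

section IntegralClosure

variable (A F : Type*) {k : Type*} {Ω : Type u} [CommRing A] [Field F] [Field Ω] [Algebra A F]
  [Algebra F Ω] [Algebra A Ω] [IsScalarTower A F Ω] [IsFractionRing A F]

theorem exists_isIntegral_adjoin_eq_top [IsDomain A] [FiniteDimensional F Ω]
    [Algebra.IsSeparable F Ω] : ∃ b : integralClosure A Ω, F⟮(b : Ω)⟯ = ⊤ := by
  obtain ⟨x, hx⟩ := Field.exists_primitive_element F Ω
  have : IsAlgebraic A x :=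
    (IsFractionRing.isAlgebraic_iff A F Ω).2 (Algebra.IsAlgebraic.isAlgebraic x)
  obtain ⟨a, ha, hax⟩ := this.exists_integral_multiple
  refine ⟨⟨a • x, hax⟩, ?_⟩
  rw [eq_top_iff, ← hx, adjoin_simple_le_iff]
  have ha' : algebraMap A F a ≠ 0 := by simpa using ha
  have hmem := F⟮a • x⟯.smul_mem (mem_adjoin_simple_self F _) (x := (algebraMap A F a)⁻¹)
  rwa [← IsScalarTower.algebraMap_smul F a x, inv_smul_smul₀ ha',
    IsScalarTower.algebraMap_smul] at hmem

variable {A} [IsIntegrallyClosed A]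

theorem exists_smul_mem_adjoin [FiniteDimensional F Ω] [Algebra.IsSeparable F Ω]
    {b : integralClosure A Ω} (hb : F⟮(b : Ω)⟯ = ⊤) :
    ∃ d : A, d ≠ 0 ∧ ∀ c : integralClosure A Ω, d • c ∈ Algebra.adjoin A {b} := by
  let pb : PowerBasis F Ω := (adjoin.powerBasis (Algebra.IsIntegral.isIntegral (b : Ω))).map
    ((equivOfEq hb).trans topEquiv)
  have hgen : pb.gen = (b : Ω) := by simp [pb]
  have hint : IsIntegral A pb.gen := hgen ▸ b.2
  obtain ⟨d, hd⟩ : ∃ d, algebraMap A F d = Algebra.discr F pb.basis :=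
    IsIntegrallyClosed.isIntegral_iff.1 <| Algebra.discr_isIntegral F fun i ↦ by
      rw [pb.basis_eq_pow]
      exact hint.pow _
  refine ⟨d, ?_, fun c ↦ ?_⟩
  · rintro rfl
    exact Algebra.discr_not_zero_of_basis F pb.basis (hd ▸ map_zero _)
  · have hc := Algebra.discr_mul_isIntegral_mem_adjoin F hint c.2
    have map_adjoin : (Algebra.adjoin A {b}).map (integralClosure A Ω).val =
        Algebra.adjoin A {(b : Ω)} := by
      simp [AlgHom.map_adjoin]
    rw [← hd, IsScalarTower.algebraMap_smul, hgen, ← map_adjoin] at hc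
    obtain ⟨y, hy, hyc⟩ := hc
    rwa [show d • c = y from Subtype.ext hyc.symm]

theorem derivative_minpoly_ne_zero [IsDomain A] [Algebra.IsSeparable F Ω]
    (c : integralClosure A Ω) : derivative (minpoly A c) ≠ 0 := by
  have hc : IsIntegral A c := Algebra.IsIntegral.isIntegral c
  have hs := (separable_iff_derivative_ne_zero
    (minpoly.irreducible (Algebra.IsIntegral.isIntegral (c : Ω)))).1
      (Algebra.IsSeparable.isSeparable F (c : Ω))
  have hmin : minpoly F (c : Ω) = (minpoly A c).map (algebraMap A F) :=
    minpoly.isIntegrallyClosed_eq_field_fractions F Ω hc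
  rw [hmin, derivative_map] at hs
  exact fun h ↦ hs (by rw [h, Polynomial.map_zero])

variable [IsDomain A] [Field k] [Algebra k A] [Algebra k Ω] [IsScalarTower k A Ω]

theorem exists_specialization_of_isGalois (hA : HasIrreducibleSpecializations k A)
    [FiniteDimensional F Ω] [IsGalois F Ω] :
    ∃ (N : Type u) (_ : Field N) (_ : Algebra k N), FiniteDimensional k N ∧ IsGalois k N ∧
      ∃ (φ : integralClosure A Ω →ₐ[k] N) (θ : Gal(Ω/F) ≃* Gal(N/k)),
        ∀ γ c, φ (galRestrict A F Ω (integralClosure A Ω) γ c) = θ γ (φ c) := by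
  obtain ⟨b, hb⟩ := exists_isIntegral_adjoin_eq_top A F (Ω := Ω)
  obtain ⟨d, hd, hdC⟩ := exists_smul_mem_adjoin F hb
  have hbint : IsIntegral A b := Algebra.IsIntegral.isIntegral b
  obtain ⟨ev, hevd, hirr, hsep⟩ := hA (minpoly A b) (minpoly.monic hbint)
    (minpoly.irreducible hbint) (derivative_minpoly_ne_zero F b) d hd
  let C := integralClosure A Ω
  have : IsFractionRing C Ω := integralClosure.isFractionRing_of_finite_extension F Ω
  have : Algebra.IsInvariant A C (C ≃ₐ[A] C) := Algebra.isInvariant_of_isGalois' A F Ω C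
  have : (RingHom.ker ev).IsMaximal :=
    RingHom.ker_isMaximal_of_surjective ev fun x ↦ ⟨algebraMap k A x, ev.commutes x⟩
  have : FaithfulSMul A C :=
    have : FaithfulSMul A Ω := .trans A F Ω
    .tower_bot A C Ω
  obtain ⟨Q, _, _⟩ :=
    Ideal.exists_maximal_ideal_liesOver_of_isIntegral (S := C) (RingHom.ker ev)
  let e : Gal(Ω/F) ≃* (C ≃ₐ[A] C) := galRestrict A F Ω C
  have : Finite (C ≃ₐ[A] C) := .of_equiv _ e.toEquiv
  have hdeg : (minpoly A b).natDegree = Nat.card (C ≃ₐ[A] C) := by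
    rw [← Nat.card_congr e.toEquiv, IsGalois.card_aut_eq_finrank, ← finrank_top', ← hb,
      adjoin.finrank (Algebra.IsIntegral.isIntegral _),
      ← (minpoly.monic hbint).natDegree_map (algebraMap A F)]
    exact congrArg _ (minpoly.isIntegrallyClosed_eq_field_fractions F Ω hbint).symm
  obtain ⟨hfin, hgal, θ, hθ⟩ := exists_galEquiv_quotient ev Q
    (adjoin_mk_eq_top ev Q hevd hdC) (minpoly.monic hbint) (minpoly.aeval A b) hdeg hirr hsep
  let := Ideal.Quotient.field Q
  exact ⟨C ⧸ Q, inferInstance, inferInstance, hfin, hgal, Ideal.Quotient.mkₐ k Q,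
    e.trans θ, fun γ c ↦ (hθ (e γ) c).symm⟩

end IntegralClosure

/-! ### Automorphisms of non-normal extensions -/

theorem exists_mulEquiv_of_surjective {G G' H H' : Type*} [Group G] [Group G'] [Group H] [Group H']
    {f : G →* H} {f' : G' →* H'} (hf : Function.Surjective f) (hf' : Function.Surjective f')
    (e : G ≃* G') (he : ∀ x, f x = 1 ↔ f' (e x) = 1) :
    ∃ Θ : H ≃* H', ∀ x, Θ (f x) = f' (e x) := by
  have map_ker : f.ker.map (e : G →* G') = f'.ker := by
    ext y
    exact Subgroup.mem_map_equiv.trans <| (he _).trans <| by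
      rw [e.apply_symm_apply, MonoidHom.mem_ker]
  refine ⟨(QuotientGroup.quotientKerEquivOfSurjective f hf).symm.trans
    ((QuotientGroup.congr _ _ e map_ker).trans
      (QuotientGroup.quotientKerEquivOfSurjective f' hf')), fun x ↦ ?_⟩
  have : f x = QuotientGroup.quotientKerEquivOfSurjective f hf x := rfl
  rw [this, MulEquiv.trans_apply, MulEquiv.symm_apply_apply]
  rfl

section Normalizer

variable {F Ω : Type*} [Field F] [Field Ω] [Algebra F Ω]

theorem mem_normalizer_of_forall_apply_eq {M : IntermediateField F Ω} {σ : Gal(Ω/F)} {g : Gal(M/F)}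
    (hσ : ∀ x : M, σ x = g x) : σ ∈ Subgroup.normalizer (M.fixingSubgroup : Set Gal(Ω/F)) := by
  have map_eq : M.map (σ : Ω →ₐ[F] Ω) = M := by
    ext y
    refine ⟨?_, fun hy ↦ ⟨g.symm ⟨y, hy⟩, (g.symm ⟨y, hy⟩).2, ?_⟩⟩
    · rintro ⟨x, hx, rfl⟩
      exact (hσ ⟨x, hx⟩).symm ▸ (g ⟨x, hx⟩).2
    · exact (hσ _).trans (by simp)
  exact Subgroup.mem_normalizer_iff_map_conj_eq.2
    ((IsGalois.map_fixingSubgroup M σ).symm.trans (congrArg fixingSubgroup map_eq))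

variable [FiniteDimensional F Ω] [IsGalois F Ω]

theorem map_eq_of_mem_normalizer {M : IntermediateField F Ω} {σ : Gal(Ω/F)}
    (hσ : σ ∈ Subgroup.normalizer (M.fixingSubgroup : Set Gal(Ω/F))) :
    M.map (σ : Ω →ₐ[F] Ω) = M := by
  rw [← IsGalois.fixedField_fixingSubgroup (M.map _), IsGalois.map_fixingSubgroup]
  exact (congrArg fixedField (Subgroup.mem_normalizer_iff_map_conj_eq.1 hσ)).trans
    (IsGalois.fixedField_fixingSubgroup M)

/-- The restriction to `M` of the automorphisms of `Ω` that normalize the fixing subgroup of `M`;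
these are the ones that map `M` onto itself. -/
noncomputable def normalizerRestrict (M : IntermediateField F Ω) :
    Subgroup.normalizer (M.fixingSubgroup : Set Gal(Ω/F)) →* Gal(M/F) where
  toFun σ := (intermediateFieldMap σ.1 M).trans (equivOfEq (map_eq_of_mem_normalizer σ.2))
  map_one' := rfl
  map_mul' _ _ := rfl

theorem coe_normalizerRestrict_apply (M : IntermediateField F Ω)
    (σ : Subgroup.normalizer (M.fixingSubgroup : Set Gal(Ω/F))) (x : M) :
    (normalizerRestrict M σ x : Ω) = σ.1 x :=
  rfl

theorem normalizerRestrict_eq_iff {M : IntermediateField F Ω}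
    {σ : Subgroup.normalizer (M.fixingSubgroup : Set Gal(Ω/F))} {g : Gal(M/F)} :
    normalizerRestrict M σ = g ↔ ∀ x : M, σ.1 x = g x := by
  simp [DFunLike.ext_iff, Subtype.ext_iff, coe_normalizerRestrict_apply]

theorem normalizerRestrict_eq_one_iff {M : IntermediateField F Ω}
    (σ : Subgroup.normalizer (M.fixingSubgroup : Set Gal(Ω/F))) :
    normalizerRestrict M σ = 1 ↔ σ.1 ∈ M.fixingSubgroup := by
  simp [normalizerRestrict_eq_iff]

theorem normalizerRestrict_surjective (M : IntermediateField F Ω) :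
    Function.Surjective (normalizerRestrict M) := by
  intro g
  have lift_apply (x : M) : g.liftNormal Ω x = g x := g.liftNormal_commutes Ω x
  exact ⟨⟨_, mem_normalizer_of_forall_apply_eq lift_apply⟩, normalizerRestrict_eq_iff.2 lift_apply⟩

theorem exists_autEquiv_fixedField_map {k N : Type*} [Field k] [Field N] [Algebra k N]
    [FiniteDimensional k N] [IsGalois k N] (θ : Gal(Ω/F) ≃* Gal(N/k)) (M : IntermediateField F Ω) :
    ∃ Θ : Gal(M/F) ≃* Gal(fixedField (M.fixingSubgroup.map (θ : Gal(Ω/F) →* Gal(N/k)))/k),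
      ∀ (σ : Gal(Ω/F)) (g : Gal(M/F)), (∀ x : M, σ x = g x) →
        ∀ y : fixedField (M.fixingSubgroup.map (θ : Gal(Ω/F) →* Gal(N/k))), θ σ y = Θ g y := by
  set H := M.fixingSubgroup.map (θ : Gal(Ω/F) →* Gal(N/k))
  have hH : (fixedField H).fixingSubgroup = H := fixingSubgroup_fixedField H
  let e : Subgroup.normalizer (M.fixingSubgroup : Set Gal(Ω/F)) ≃*
      Subgroup.normalizer ((fixedField H).fixingSubgroup : Set Gal(N/k)) :=
    (θ.subgroupMap _).trans (MulEquiv.subgroupCongr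
      ((Subgroup.map_equiv_normalizer_eq _ θ).trans (by rw [hH]; rfl)))
  have mem_iff (σ : Gal(Ω/F)) : σ ∈ M.fixingSubgroup ↔ θ σ ∈ (fixedField H).fixingSubgroup := by
    rw [hH]
    exact (Subgroup.mem_map_iff_mem θ.injective).symm
  obtain ⟨Θ, hΘ⟩ := exists_mulEquiv_of_surjective (normalizerRestrict_surjective M)
    (normalizerRestrict_surjective (fixedField H)) e fun σ ↦ by
      rw [normalizerRestrict_eq_one_iff, normalizerRestrict_eq_one_iff, mem_iff]
      rfl
  refine ⟨Θ, fun σ g hσ y ↦ ?_⟩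
  have hσg : normalizerRestrict M ⟨σ, mem_normalizer_of_forall_apply_eq hσ⟩ = g :=
    normalizerRestrict_eq_iff.2 hσ
  rw [← hσg, hΘ]
  rfl

theorem exists_autEquiv_of_galEquiv {k M N : Type*} [Field M] [Algebra F M] [Field k] [Field N]
    [Algebra k N] [FiniteDimensional k N] [IsGalois k N] (θ : Gal(Ω/F) ≃* Gal(N/k))
    (f : M →ₐ[F] Ω) :
    ∃ (E : IntermediateField k N) (Θ : Gal(M/F) ≃* Gal(E/k)),
      (∀ y, (∀ σ, (∀ x, σ (f x) = f x) → θ σ y = y) → y ∈ E) ∧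
        ∀ σ g, (∀ x, σ (f x) = f (g x)) → ∀ y : E, θ σ y = Θ g y := by
  let e : M ≃ₐ[F] f.fieldRange := AlgEquiv.ofInjectiveField f
  obtain ⟨Θ, hΘ⟩ := exists_autEquiv_fixedField_map θ f.fieldRange
  refine ⟨_, e.autCongr.trans Θ, fun y hy ↦ ?_, fun σ g hσ ↦ hΘ σ _ fun x ↦ ?_⟩
  · rintro ⟨_, σ, hσ, rfl⟩
    exact hy σ fun x ↦ hσ (e x)
  · obtain ⟨x, rfl⟩ := e.surjective x
    exact (hσ x).trans (congrArg (fun z ↦ (e (g z) : Ω)) (e.symm_apply_apply x).symm)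

end Normalizer

theorem exists_specialization_of_isSeparable {A : Type*} {F : Type u} {k M : Type*} [CommRing A]
    [IsDomain A] [IsIntegrallyClosed A] [Field F] [Algebra A F] [IsFractionRing A F] [Field M]
    [Algebra F M] [Algebra A M] [IsScalarTower A F M] [FiniteDimensional F M]
    [Algebra.IsSeparable F M] [Field k] [Algebra k A] [Algebra k M] [IsScalarTower k A M]
    (hA : HasIrreducibleSpecializations k A) :
    ∃ (E : Type u) (_ : Field E) (_ : Algebra k E),
      FiniteDimensional k E ∧ Algebra.IsSeparable k E ∧
      ∃ (φ : integralClosure A M →ₐ[k] E) (Θ : Gal(M/F) ≃* Gal(E/k)),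
        ∀ (g : Gal(M/F)) c,
          φ (((g : M →ₐ[F] M).restrictScalars A).mapIntegralClosure c) = Θ g (φ c) := by
  obtain ⟨ι⟩ : Nonempty (M →ₐ[F] SeparableClosure F) := ⟨IsSepClosed.lift⟩
  let Ω := IntermediateField.normalClosure F M (SeparableClosure F)
  let f : M →ₐ[F] Ω := ι.codRestrict _ fun x ↦ ι.fieldRange_le_normalClosure ⟨x, rfl⟩
  let _ : Algebra k Ω := Algebra.compHom Ω (algebraMap k A)
  have : IsScalarTower k A Ω := .of_algebraMap_eq fun _ ↦ rfl
  obtain ⟨N, _, _, _, _, φ, θ, hφ⟩ := exists_specialization_of_isGalois F (Ω := Ω) hA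
  obtain ⟨E, Θ, mem_E, hΘ⟩ := exists_autEquiv_of_galEquiv θ f
  let ψ : integralClosure A M →ₐ[k] N :=
    φ.comp ((f.restrictScalars A).mapIntegralClosure.restrictScalars k)
  have hψ (σ : Gal(Ω/F)) (g : Gal(M/F)) (hσ : ∀ x, σ (f x) = f (g x)) (c : integralClosure A M) :
      θ σ (ψ c) = ψ (((g : M →ₐ[F] M).restrictScalars A).mapIntegralClosure c) :=
    (hφ σ _).symm.trans (congrArg φ (Subtype.ext ((algebraMap_galRestrict_apply A σ
      ((f.restrictScalars A).mapIntegralClosure c)).trans (hσ c))))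
  let φE : integralClosure A M →ₐ[k] E :=
    ψ.codRestrict E.toSubalgebra fun c ↦ mem_E _ fun σ hσ ↦ hψ σ 1 hσ c
  refine ⟨E, inferInstance, inferInstance, inferInstance, inferInstance, φE, Θ, fun g c ↦ ?_⟩
  let _ : Algebra M Ω := f.toRingHom.toAlgebra
  have : IsScalarTower F M Ω := .of_algebraMap_eq fun x ↦ (f.commutes x).symm
  have hg : ∀ x, g.liftNormal Ω (f x) = f (g x) := g.liftNormal_commutes Ω
  exact Subtype.ext ((hψ _ g hg c).symm.trans (hΘ _ g hg (φE c)))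

/-! ### Rational functions and a rigid polynomial -/

section RigidPolynomial

/-- The polynomial `X (X - 1)² (X - ω)³`. For `ω ≠ 0, 1` it is rigid: its roots have distinct
multiplicities, so that no affine substitution other than the identity preserves it. -/
noncomputable def rigidPolynomial {R : Type*} [CommRing R] (ω : R) : R[X] :=
  X * (X - 1) ^ 2 * (X - C ω) ^ 3

section CommRing

variable {R S : Type*} [CommRing R] [CommRing S] (ω : R)

theorem rigidPolynomial_monic : (rigidPolynomial ω).Monic :=
  (monic_X.mul ((monic_X_sub_C (1 : R)).pow 2)).mul ((monic_X_sub_C ω).pow 3)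

theorem natDegree_rigidPolynomial [Nontrivial R] : (rigidPolynomial ω).natDegree = 6 := by
  unfold rigidPolynomial
  rw [← C_1]
  compute_degree!

theorem aeval_rigidPolynomial [Algebra R S] (x : S) :
    aeval x (rigidPolynomial ω) = x * (x - 1) ^ 2 * (x - algebraMap R S ω) ^ 3 := by
  simp [rigidPolynomial]

theorem map_rigidPolynomial (f : R →+* S) :
    (rigidPolynomial ω).map f = rigidPolynomial (f ω) := by
  simp [rigidPolynomial]

theorem roots_rigidPolynomial [IsDomain R] :
    (rigidPolynomial ω).roots = {0} + 2 • {1} + 3 • {ω} := by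
  have h := (rigidPolynomial_monic ω).ne_zero
  have h' := left_ne_zero_of_mul h
  rw [rigidPolynomial, roots_mul h, roots_mul h', roots_pow, roots_pow, roots_X, roots_X_sub_C,
    ← C_1, roots_X_sub_C]

theorem derivative_rigidPolynomial_ne_zero [IsDomain R] {ω : R} (hω : ω ≠ 0) :
    derivative (rigidPolynomial ω) ≠ 0 := by
  intro h
  simpa [rigidPolynomial, derivative_pow, hω] using congrArg (eval 0) h

end CommRing

theorem eq_X_of_rigidPolynomial_comp_eq {E : Type*} [Field E] {ω ω' : E} (h0 : ω ≠ 0) (h1 : ω ≠ 1)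
    {p : E[X]} (h : (rigidPolynomial ω').comp p = rigidPolynomial ω) : p = X ∧ ω' = ω := by
  classical
  have hdeg : p.natDegree = 1 := by
    have := congrArg natDegree h
    rw [natDegree_comp, natDegree_rigidPolynomial, natDegree_rigidPolynomial] at this
    lia
  obtain ⟨a, ha, b, rfl⟩ := natDegree_eq_one.1 hdeg
  have hroots := map_roots_comp_C_mul_X_add_C (rigidPolynomial ω') a b ha.isUnit
  rw [h, roots_rigidPolynomial, roots_rigidPolynomial] at hroots
  have hcount (z : E) := congrArg (Multiset.count z) hroots
  simp only [Multiset.map_add, Multiset.map_nsmul, Multiset.map_singleton, Multiset.count_add,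
    Multiset.count_nsmul, Multiset.count_singleton] at hcount
  have hb : b = 0 := by grind [hcount 0, hcount b]
  have ha : a = 1 := by grind [hcount 1, hcount (a + b)]
  have hω : ω' = ω := by grind [hcount ω]
  simp [ha, hb, hω]

end RigidPolynomial

section RatFunc

variable {K E : Type*} [Field K] [Field E] [Algebra K E]

theorem exists_algHom_apply_algebraMap [Algebra.IsAlgebraic K E]
    (σ : RatFunc E →ₐ[K] RatFunc E) :
    ∃ s : E →ₐ[K] E, ∀ e, σ (algebraMap E (RatFunc E) e) = algebraMap E (RatFunc E) (s e) := by
  let ι : E →ₐ[K] RatFunc E := IsScalarTower.toAlgHom K E (RatFunc E)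
  have hmem (e : E) : σ (ι e) ∈ ι.range := by
    by_contra hne
    refine RatFunc.transcendental_of_ne_C (σ (ι e)) (fun ⟨c, hc⟩ ↦ hne ⟨c, hc.symm⟩) ?_
    exact (((Algebra.IsAlgebraic.isAlgebraic (R := K) e).algHom ι).algHom σ).tower_top E
  let j : E ≃ₐ[K] ι.range := .ofInjective ι ι.injective
  refine ⟨j.symm.toAlgHom.comp ((σ.comp ι).codRestrict _ hmem), fun e ↦ ?_⟩
  exact congrArg Subtype.val (j.apply_symm_apply ⟨σ (ι e), hmem e⟩).symm

theorem apply_X_eq_X_of_apply_rigidPolynomial {ω : E} (h0 : ω ≠ 0) (h1 : ω ≠ 1)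
    {σ : RatFunc E →+* RatFunc E} {s : E →+* E}
    (hs : ∀ e, σ (algebraMap E (RatFunc E) e) = algebraMap E (RatFunc E) (s e))
    (hσ : σ (aeval RatFunc.X (rigidPolynomial ω)) = aeval RatFunc.X (rigidPolynomial ω)) :
    σ RatFunc.X = RatFunc.X ∧ s ω = ω := by
  have hσX : aeval (σ RatFunc.X) (rigidPolynomial (s ω)) =
      aeval RatFunc.X (rigidPolynomial ω) := by
    rw [← hσ, aeval_rigidPolynomial, aeval_rigidPolynomial]
    simp only [map_mul, map_pow, map_sub, map_one, hs]
  have hint : IsIntegral E[X] (σ RatFunc.X) := by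
    refine .of_aeval_monic (rigidPolynomial_monic (C (s ω)))
      (by simp [natDegree_rigidPolynomial]) ?_
    rw [← algebraMap_eq, ← map_rigidPolynomial, aeval_map_algebraMap, hσX,
      RatFunc.aeval_X_left_eq_algebraMap]
    exact isIntegral_algebraMap
  obtain ⟨p, hp⟩ := IsIntegrallyClosed.isIntegral_iff.1 hint
  have hcomp : (rigidPolynomial (s ω)).comp p = rigidPolynomial ω := by
    refine IsFractionRing.injective E[X] (RatFunc E) ?_
    rw [comp_eq_aeval, ← aeval_algebraMap_apply, hp, hσX, RatFunc.aeval_X_left_eq_algebraMap]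
  obtain ⟨rfl, hω⟩ := eq_X_of_rigidPolynomial_comp_eq h0 h1 hcomp
  exact ⟨hp.symm.trans RatFunc.algebraMap_X, hω⟩

theorem exists_adjoin_simple_eq_ne_zero_ne_one [Infinite K] [FiniteDimensional K E]
    [Algebra.IsSeparable K E] (M : IntermediateField K E) :
    ∃ ω : E, ω ≠ 0 ∧ ω ≠ 1 ∧ K⟮ω⟯ = M := by
  obtain ⟨θ, hθ⟩ := Field.exists_primitive_element K M
  have hθM : K⟮(θ : E)⟯ = M := by rw [← lift_adjoin_simple, hθ, lift_top]
  have hinf : (Set.range fun c : K ↦ (θ : E) + algebraMap K E c).Infinite :=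
    Set.infinite_range_of_injective fun _ _ h ↦ (algebraMap K E).injective (add_left_cancel h)
  obtain ⟨_, ⟨c, rfl⟩, hc⟩ := (hinf.sdiff (Set.toFinite {0, 1})).nonempty
  simp only [Set.mem_insert_iff, Set.mem_singleton_iff, not_or] at hc
  refine ⟨_, hc.1, hc.2, ?_⟩
  refine Eq.trans (le_antisymm ?_ ?_) hθM <;> rw [adjoin_simple_le_iff]
  · exact add_mem (mem_adjoin_simple_self K _) (IntermediateField.algebraMap_mem _ c)
  · simpa using sub_mem (mem_adjoin_simple_self K ((θ : E) + algebraMap K E c))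
      (IntermediateField.algebraMap_mem _ c)

variable (K E) in
/-- The action of `Gal(E/K)` on the coefficients of rational functions over `E`. -/
noncomputable def coeffHom : Gal(E/K) →* Gal(RatFunc E/K) :=
  (IsFractionRing.fieldEquivOfAlgEquivHom K (RatFunc E)).comp
    (MulSemiringAction.toAlgAut Gal(E/K) K E[X])

theorem coeffHom_algebraMap (s : Gal(E/K)) (p : E[X]) :
    coeffHom K E s (algebraMap E[X] (RatFunc E) p) = algebraMap E[X] (RatFunc E) (s • p) :=
  IsFractionRing.fieldEquivOfAlgEquiv_algebraMap ..

theorem coeffHom_algebraMap_coeff (s : Gal(E/K)) (e : E) :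
    coeffHom K E s (algebraMap E (RatFunc E) e) = algebraMap E (RatFunc E) (s e) := by
  simp only [IsScalarTower.algebraMap_apply E E[X] (RatFunc E), coeffHom_algebraMap, algebraMap_eq,
    smul_C, AlgEquiv.smul_def]

theorem coeffHom_X (s : Gal(E/K)) : coeffHom K E s RatFunc.X = RatFunc.X := by
  rw [← RatFunc.algebraMap_X, coeffHom_algebraMap, smul_X]

theorem coeffHom_injective : Function.Injective (coeffHom K E) := fun s t h ↦ AlgEquiv.ext fun e ↦
  (algebraMap E (RatFunc E)).injective <| by
    rw [← coeffHom_algebraMap_coeff, h, coeffHom_algebraMap_coeff]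

theorem mem_fixingSubgroup_adjoin_simple_iff {x : E} {s : Gal(E/K)} :
    s ∈ K⟮x⟯.fixingSubgroup ↔ s x = x := by
  simpa using forall_mem_adjoin_smul_eq_self_iff K (S := {x}) s

theorem ratFunc_algEquiv_ext {σ τ : Gal(RatFunc E/K)}
    (hcoeff : ∀ e, σ (algebraMap E _ e) = τ (algebraMap E _ e)) (hX : σ RatFunc.X = τ RatFunc.X) :
    σ = τ := by
  have : (σ : RatFunc E →+* RatFunc E) = τ := by
    refine IsLocalization.ringHom_ext (nonZeroDivisors E[X]) (Polynomial.ringHom_ext hcoeff ?_)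
    simpa using hX
  exact AlgEquiv.ext (RingHom.congr_fun this)

theorem fixingSubgroup_adjoin_rigidPolynomial [Algebra.IsAlgebraic K E] {ω : E} (h0 : ω ≠ 0)
    (h1 : ω ≠ 1) :
    K⟮aeval (RatFunc.X : RatFunc E) (rigidPolynomial ω)⟯.fixingSubgroup =
      K⟮ω⟯.fixingSubgroup.map (coeffHom K E) := by
  ext σ
  simp only [Subgroup.mem_map, mem_fixingSubgroup_adjoin_simple_iff]
  constructor
  · intro hσ
    obtain ⟨s, hs⟩ := exists_algHom_apply_algebraMap σ.toAlgHom
    obtain ⟨hX, hω⟩ := apply_X_eq_X_of_apply_rigidPolynomial h0 h1 (σ := σ.toRingHom) (s := s)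
      hs hσ
    refine ⟨.ofBijective s (Algebra.IsAlgebraic.algHom_bijective s), hω, ?_⟩
    refine ratFunc_algEquiv_ext (fun e ↦ ?_) ?_
    · exact (coeffHom_algebraMap_coeff _ e).trans (hs e).symm
    · exact (coeffHom_X _).trans hX.symm
  · rintro ⟨s, hs, rfl⟩
    rw [aeval_rigidPolynomial]
    simp only [map_mul, map_pow, map_sub, map_one, coeffHom_X, coeffHom_algebraMap_coeff, hs]

end RatFunc

section RationalFunctionExtension

theorem isSeparable_of_aeval_derivative_ne_zero {M Ω : Type*} [Field M] [Field Ω] [Algebra M Ω]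
    {x : Ω} {q : M[X]} (hq : aeval x q = 0) (hq' : aeval x (derivative q) ≠ 0) :
    IsSeparable M x := by
  have hq0 : q ≠ 0 := by
    rintro rfl
    simp at hq'
  have hx : IsIntegral M x := IsAlgebraic.isIntegral ⟨q, hq0, hq⟩
  rw [IsSeparable, separable_iff_derivative_ne_zero (minpoly.irreducible hx)]
  intro hd
  obtain ⟨r, rfl⟩ := minpoly.dvd M x hq
  simp [derivative_mul, hd] at hq'

variable {K E : Type*} [Field K] [Field E] [Algebra K E]

theorem isSeparable_adjoin_aeval_X [Algebra.IsSeparable K E] {p : E[X]} (hp : derivative p ≠ 0) :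
    Algebra.IsSeparable K⟮aeval (RatFunc.X : RatFunc E) p⟯ (RatFunc E) := by
  set F := K⟮aeval (RatFunc.X : RatFunc E) p⟯
  let S := separableClosure F (RatFunc E)
  have algebraMap_mem_S (e : E) : algebraMap E (RatFunc E) e ∈ S := by
    have := (Algebra.IsSeparable.isSeparable K e).map (IsScalarTower.toAlgHom K E (RatFunc E))
      (algebraMap E (RatFunc E)).injective
    exact this.tower_top F
  let ι : E →+* S := (algebraMap E (RatFunc E)).codRestrict S algebraMap_mem_S
  have aeval_X_map (q : E[X]) : aeval (RatFunc.X : RatFunc E) (q.map ι) = aeval RatFunc.X q := by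
    rw [aeval_def, eval₂_map, aeval_def]
    rfl
  have hX : IsSeparable S (RatFunc.X : RatFunc E) := by
    let u : S := algebraMap F S ⟨_, mem_adjoin_simple_self K _⟩
    refine isSeparable_of_aeval_derivative_ne_zero (q := p.map ι - C u) ?_ ?_
    · rw [map_sub, aeval_X_map, aeval_C]
      exact sub_self _
    · rw [derivative_sub, derivative_C, sub_zero, derivative_map, aeval_X_map,
        RatFunc.aeval_X_left_eq_algebraMap]
      simpa using hp
  have hXS : RatFunc.X ∈ S := by
    obtain ⟨y, hy⟩ := (separableClosure.separableClosure_eq_bot F (RatFunc E)).le hX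
    exact hy ▸ y.2
  have hle : E⟮(RatFunc.X : RatFunc E)⟯ ≤ S.toSubfield.toIntermediateField algebraMap_mem_S := by
    rw [adjoin_simple_le_iff]
    exact hXS
  rw [← separableClosure.eq_top_iff, eq_top_iff]
  intro x _
  exact hle (RatFunc.adjoin_X (K := E) ▸ mem_top)

theorem finiteDimensional_adjoin_aeval_X [FiniteDimensional K E] [Algebra.IsSeparable K E]
    {p : E[X]} (hp : derivative p ≠ 0) :
    FiniteDimensional K⟮aeval (RatFunc.X : RatFunc E) p⟯ (RatFunc E) := by
  have := isSeparable_adjoin_aeval_X (K := K) hp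
  have : Algebra.FiniteType K E[X] := .trans (inferInstance : Algebra.FiniteType K E) inferInstance
  have : Algebra.EssFiniteType E[X] (RatFunc E) := .of_isLocalization _ (nonZeroDivisors E[X])
  have : Algebra.EssFiniteType K (RatFunc E) := .comp K E[X] _
  have : Algebra.EssFiniteType K⟮aeval (RatFunc.X : RatFunc E) p⟯ (RatFunc E) := .of_comp K _ _
  exact Algebra.finite_of_essFiniteType_of_isAlgebraic

theorem exists_transcendental_galEquiv [Infinite K] [FiniteDimensional K E]
    [Algebra.IsSeparable K E] (H : Subgroup Gal(E/K)) :
    ∃ u : RatFunc E, Transcendental E u ∧ FiniteDimensional K⟮u⟯ (RatFunc E) ∧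
      Algebra.IsSeparable K⟮u⟯ (RatFunc E) ∧ ∃ e : H ≃* Gal(RatFunc E/K⟮u⟯),
        ∀ h x, e h (algebraMap E (RatFunc E) x) = algebraMap E (RatFunc E) (h.1 x) := by
  obtain ⟨ω, h0, h1, hω⟩ := exists_adjoin_simple_eq_ne_zero_ne_one (fixedField H)
  have hp := derivative_rigidPolynomial_ne_zero h0
  have hH : H.map (coeffHom K E) =
      K⟮aeval (RatFunc.X : RatFunc E) (rigidPolynomial ω)⟯.fixingSubgroup := by
    rw [fixingSubgroup_adjoin_rigidPolynomial h0 h1, hω, fixingSubgroup_fixedField]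
  have transcendental_u : Transcendental E (aeval (RatFunc.X : RatFunc E) (rigidPolynomial ω)) := by
    rw [RatFunc.aeval_X_left_eq_algebraMap,
      transcendental_algebraMap_iff (RatFunc.algebraMap_injective E)]
    simpa using (transcendental_X E).aeval (rigidPolynomial ω) (by simp [natDegree_rigidPolynomial])
      (by simp [(rigidPolynomial_monic ω).leadingCoeff])
  exact ⟨aeval RatFunc.X (rigidPolynomial ω), transcendental_u, finiteDimensional_adjoin_aeval_X hp,
    isSeparable_adjoin_aeval_X hp, ((H.equivMapOfInjective _ coeffHom_injective).trans
      (MulEquiv.subgroupCongr hH)).trans (fixingSubgroupEquiv _),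
    fun h x ↦ coeffHom_algebraMap_coeff h.1 x⟩

end RationalFunctionExtension

/-! ### Noether's construction -/

section EsymmField

variable (k L G E : Type*) [Field k] [Field L] [Fintype G] [Field E]
  [Algebra (MvPolynomial G L) E]

/-- The elementary symmetric polynomials `e₁, …, eₙ` in `n = |G|` variables, as elements of a field
`E` over `L[X_g : g ∈ G]`, where `E` stands for `L(X_g : g ∈ G)`. -/
noncomputable def esymmFamily (i : Fin (Fintype.card G)) : E :=
  algebraMap (MvPolynomial G L) E (MvPolynomial.esymm G L (i + 1))

variable [Algebra k E]

/-- The subfield `k(e₁, …, eₙ)` of `L(X_g : g ∈ G)` generated over `k` by the elementary symmetric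
polynomials. It is the purely transcendental base field of Noether's construction. -/
noncomputable def esymmField : IntermediateField k E :=
  IntermediateField.adjoin k (Set.range (esymmFamily L G E))

variable {E}

theorem algebraMap_esymm_mem_esymmField {i : ℕ} (hi : i ≤ Fintype.card G) :
    algebraMap (MvPolynomial G L) E (MvPolynomial.esymm G L i) ∈ esymmField k L G E := by
  cases i with
  | zero => simp
  | succ i => exact IntermediateField.subset_adjoin _ _ ⟨⟨i, hi⟩, rfl⟩

variable [IsFractionRing (MvPolynomial G L) E]

variable {G} in
theorem isSeparable_esymmField_algebraMap_X (g : G) :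
    IsSeparable (esymmField k L G E) (algebraMap (MvPolynomial G L) E (MvPolynomial.X g)) := by
  let x (h : G) : E := algebraMap (MvPolynomial G L) E (MvPolynomial.X h)
  have x_injective : Function.Injective x :=
    (IsFractionRing.injective (MvPolynomial G L) E).comp MvPolynomial.X_injective
  have prod_eq_sum : ∏ h : G, (X - C (-x h)) = ∑ j ∈ Finset.range (Fintype.card G + 1),
      C (algebraMap _ E (MvPolynomial.esymm G L j)) * X ^ (Fintype.card G - j) := by
    simpa [Polynomial.map_prod, Polynomial.map_sum, x, add_comm X] using congrArg
      (Polynomial.map (algebraMap _ E)) (MvPolynomial.prod_C_add_X_eq_sum_esymm L G)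
  obtain ⟨q, hq⟩ : ∃ q : (esymmField k L G E)[X],
      q.map (algebraMap _ E) = ∏ h : G, (X - C (-x h)) := by
    rw [← mem_lifts, prod_eq_sum]
    refine sum_mem fun j hj ↦ mul_mem (C'_mem_lifts ?_) (X_pow_mem_lifts _ _)
    exact ⟨⟨_, algebraMap_esymm_mem_esymmField k L G (Finset.mem_range_succ_iff.1 hj)⟩, rfl⟩
  have hqsep : q.Separable := by
    rw [← separable_map (algebraMap _ E), hq]
    exact separable_prod_X_sub_C_iff.2 (neg_injective.comp x_injective)
  have hneg : IsSeparable (esymmField k L G E) (-x g) := by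
    refine hqsep.of_dvd (minpoly.dvd _ _ ?_)
    rw [aeval_def, ← eval_map, hq, eval_prod]
    exact Finset.prod_eq_zero (Finset.mem_univ g) (by simp)
  exact neg_mem_iff.1 (mem_separableClosure_iff.2 hneg)

variable [Algebra k L] [IsScalarTower k (MvPolynomial G L) E]

variable (E) in
theorem algebraicIndependent_esymmFamily : AlgebraicIndependent k (esymmFamily L G E) := by
  have esymm_indep : AlgebraicIndependent k fun i : Fin (Fintype.card G) ↦
      MvPolynomial.esymm G k (i + 1) := fun p q hpq ↦
    MvPolynomial.esymmAlgHom_injective (σ := G) k le_rfl <| Subtype.ext <| by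
      rwa [MvPolynomial.esymmAlgHom_apply, MvPolynomial.esymmAlgHom_apply]
  let f : MvPolynomial G k →ₐ[k] E := (IsScalarTower.toAlgHom k (MvPolynomial G L) E).comp
    (MvPolynomial.mapAlgHom (Algebra.ofId k L))
  have hf : Function.Injective f := (IsFractionRing.injective (MvPolynomial G L) E).comp
    (MvPolynomial.map_injective _ (algebraMap k L).injective)
  convert esymm_indep.map' hf using 1
  ext i
  exact congrArg (algebraMap _ E) (MvPolynomial.map_esymm G k _ (algebraMap k L)).symm

theorem isSeparable_esymmField [Algebra.IsSeparable k L] :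
    Algebra.IsSeparable (esymmField k L G E) E := by
  rw [← separableClosure.eq_top_iff, eq_top_iff]
  have algebraMap_mem (p : MvPolynomial G L) :
      algebraMap _ E p ∈ separableClosure (esymmField k L G E) E := by
    induction p using MvPolynomial.induction_on with
    | C a =>
      let ι : L →ₐ[k] E := (IsScalarTower.toAlgHom k (MvPolynomial G L) E).comp
        (IsScalarTower.toAlgHom k L (MvPolynomial G L))
      exact ((Algebra.IsSeparable.isSeparable k a).map ι ι.injective).tower_top _
    | add p q hp hq => exact map_add (algebraMap _ E) p q ▸ add_mem hp hq
    | mul_X p g hp =>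
      exact map_mul (algebraMap _ E) p _ ▸ mul_mem hp (isSeparable_esymmField_algebraMap_X k L g)
  intro z _
  obtain ⟨a, b, _, rfl⟩ := IsFractionRing.div_surjective (A := MvPolynomial G L) z
  exact div_mem (algebraMap_mem a) (algebraMap_mem b)

theorem finiteDimensional_esymmField [FiniteDimensional k L] [Algebra.IsSeparable k L] :
    FiniteDimensional (esymmField k L G E) E := by
  have := isSeparable_esymmField k L G (E := E)
  have : Algebra.FiniteType k (MvPolynomial G L) :=
    .trans (inferInstance : Algebra.FiniteType k L) inferInstance
  have : Algebra.EssFiniteType (MvPolynomial G L) E :=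
    .of_isLocalization _ (nonZeroDivisors (MvPolynomial G L))
  have : Algebra.EssFiniteType k E := .comp k (MvPolynomial G L) _
  have : Algebra.EssFiniteType (esymmField k L G E) E := .of_comp k _ _
  exact Algebra.finite_of_essFiniteType_of_isAlgebraic

theorem infinite_esymmField [Nonempty G] [FiniteDimensional k L] [Algebra.IsSeparable k L] :
    Infinite (esymmField k L G E) := by
  by_contra h
  rw [not_infinite_iff_finite] at h
  have := finiteDimensional_esymmField k L G (E := E)
  have : Finite E := Module.finite_of_finite (esymmField k L G E)
  have : Finite (MvPolynomial G L) := .of_injective _ (IsFractionRing.injective _ E)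
  exact not_finite (MvPolynomial G L)

end EsymmField

section RegularAction

variable {k L G : Type*} [Field k] [Field L] [Algebra k L] [Group G] (α : G →* Gal(L/k))

/-- The action of `G` on `L[X_h : h ∈ G]` that permutes the variables by left translation and acts
on the coefficients through `α`. -/
noncomputable def regularAction : G →* (MvPolynomial G L ≃ₐ[k] MvPolynomial G L) where
  toFun g := (MvPolynomial.mapAlgEquiv G (α g)).trans
    ((MvPolynomial.renameEquiv L (Equiv.mulLeft g)).restrictScalars k)
  map_one' := by
    refine AlgEquiv.ext fun p ↦ ?_
    induction p using MvPolynomial.induction_on <;> simp_all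
  map_mul' g h := by
    refine AlgEquiv.ext fun p ↦ ?_
    induction p using MvPolynomial.induction_on <;> simp_all [mul_assoc]

theorem regularAction_apply (g : G) (p : MvPolynomial G L) :
    regularAction α g p = MvPolynomial.rename (g * ·) (MvPolynomial.map (α g : L →+* L) p) :=
  rfl

theorem regularAction_esymm [Fintype G] (g : G) (n : ℕ) :
    regularAction α g (MvPolynomial.esymm G L n) = MvPolynomial.esymm G L n := by
  rw [regularAction_apply, MvPolynomial.map_esymm]
  exact MvPolynomial.rename_esymm G L n (Equiv.mulLeft g)

theorem regularAction_injective : Function.Injective (regularAction α) := by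
  intro g h hgh
  simpa [regularAction_apply] using DFunLike.congr_fun hgh (MvPolynomial.X 1)

theorem exists_monoidHom_gal_esymmField [Fintype G] (E : Type*) [Field E]
    [Algebra (MvPolynomial G L) E] [IsFractionRing (MvPolynomial G L) E] [Algebra k E]
    [IsScalarTower k (MvPolynomial G L) E] :
    ∃ γ : G →* Gal(E/esymmField k L G E), Function.Injective γ ∧
      ∀ g l, γ g (algebraMap (MvPolynomial G L) E (MvPolynomial.C l)) =
        algebraMap (MvPolynomial G L) E (MvPolynomial.C (α g l)) := by
  let ρ : G →* Gal(E/k) := (IsFractionRing.fieldEquivOfAlgEquivHom k E).comp (regularAction α)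
  have ρ_algebraMap (g : G) (p : MvPolynomial G L) :
      ρ g (algebraMap _ E p) = algebraMap _ E (regularAction α g p) :=
    IsFractionRing.fieldEquivOfAlgEquiv_algebraMap ..
  have ρ_injective : Function.Injective ρ :=
    (IsFractionRing.fieldEquivOfAlgEquivHom_injective k (MvPolynomial G L) k E).comp
      (regularAction_injective α)
  have ρ_mem (g : G) : ρ g ∈ (esymmField k L G E).fixingSubgroup := by
    rw [IntermediateField.mem_fixingSubgroup_iff]
    refine (forall_mem_adjoin_smul_eq_self_iff k (ρ g)).2 ?_
    rintro _ ⟨i, rfl⟩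
    exact (ρ_algebraMap g _).trans (congrArg _ (regularAction_esymm α g _))
  refine ⟨(fixingSubgroupEquiv _).toMonoidHom.comp (ρ.codRestrict _ ρ_mem), ?_, fun g l ↦ ?_⟩
  · exact (fixingSubgroupEquiv _).injective.comp
      ((MonoidHom.injective_codRestrict ..).2 ρ_injective)
  · exact (ρ_algebraMap g _).trans (by simp [regularAction_apply])

end RegularAction

/-! ### Embedding problems -/

theorem restrictScalars_adjoin_simple_eq_adjoin_range {k E M ι : Type*} [Field k] [Field E]
    [Field M] [Algebra k E] [Algebra E M] [Algebra k M] [IsScalarTower k E M] {w : ι → E}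
    {K : IntermediateField k E} (hK : K = IntermediateField.adjoin k (Set.range w)) (u : M) :
    (K⟮u⟯).restrictScalars k =
      IntermediateField.adjoin k
        (Set.range (Sum.elim (fun _ : Unit ↦ u) (algebraMap E M ∘ w))) := by
  set v := Sum.elim (fun _ : Unit ↦ u) (algebraMap E M ∘ w)
  set F := IntermediateField.adjoin k (Set.range v)
  have v_mem (i) : v i ∈ F := subset_adjoin k _ ⟨i, rfl⟩
  have K_le : K ≤ F.comap (IsScalarTower.toAlgHom k E M) := by
    rw [hK, adjoin_le_iff]
    rintro _ ⟨i, rfl⟩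
    exact v_mem (.inr i)
  have w_mem (i) : w i ∈ K := hK ▸ subset_adjoin k _ ⟨i, rfl⟩
  refine le_antisymm (fun x hx ↦ ?_) ?_
  · let F' : IntermediateField K M := F.toSubfield.toIntermediateField fun x ↦ K_le x.2
    have le_F' : K⟮u⟯ ≤ F' := adjoin_simple_le_iff.2 (v_mem (.inl ()))
    exact le_F' hx
  · rw [adjoin_le_iff]
    rintro _ ⟨_ | i, rfl⟩
    · exact mem_adjoin_simple_self K u
    · exact (K⟮u⟯).algebraMap_mem ⟨w i, w_mem i⟩

theorem exists_galEquiv_adjoin_algebraicIndependent {k : Type*} {L : Type u} {G : Type w} [Field k]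
    [Field L] [Algebra k L] [FiniteDimensional k L] [Algebra.IsSeparable k L] [Group G] [Finite G]
    (α : G →* Gal(L/k)) :
    ∃ (M : Type (max u w)) (_ : Field M) (_ : Algebra k M) (ι : Type) (_ : Finite ι)
      (_ : Nonempty ι) (v : ι → M) (F : IntermediateField k M),
      AlgebraicIndependent k v ∧ F = IntermediateField.adjoin k (Set.range v) ∧
      FiniteDimensional F M ∧ Algebra.IsSeparable F M ∧ ∃ (j : L →ₐ[k] M) (e : G ≃* Gal(M/F)),
        ∀ g l, e g (j l) = j (α g l) := by
  cases nonempty_fintype G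
  let E := FractionRing (MvPolynomial G L)
  let K := esymmField k L G E
  let ι : L →ₐ[k] E := (IsScalarTower.toAlgHom k (MvPolynomial G L) E).comp
    (IsScalarTower.toAlgHom k L (MvPolynomial G L))
  obtain ⟨γ, γ_injective, hγ⟩ := exists_monoidHom_gal_esymmField α E
  have : FiniteDimensional K E := finiteDimensional_esymmField k L G
  have : Algebra.IsSeparable K E := isSeparable_esymmField k L G
  have : Infinite K := infinite_esymmField k L G
  obtain ⟨u, hu, hfin, hsep, e, he⟩ := exists_transcendental_galEquiv γ.range
  have hv := (algebraicIndependent_esymmFamily k L G E).sumElim_comp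
    (algebraicIndependent_unique_type_iff (x := fun _ : Unit ↦ u).2 hu)
  refine ⟨RatFunc E, inferInstance, inferInstance, _, inferInstance, inferInstance, _,
    K⟮u⟯.restrictScalars k, hv, restrictScalars_adjoin_simple_eq_adjoin_range rfl u, hfin, hsep,
    (IsScalarTower.toAlgHom k E (RatFunc E)).comp ι,
    (MonoidHom.ofInjective γ_injective).trans e, fun g l ↦ ?_⟩
  exact (he _ _).trans (congrArg _ (hγ g l))

theorem IsHilbertianField.hasIrreducibleSpecializations_adjoin {k : Type} [Field k]
    (hk : IsHilbertianField k) {M ι : Type*} [Field M] [Algebra k M] [Finite ι] [Nonempty ι]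
    {v : ι → M} (hv : AlgebraicIndependent k v) :
    HasIrreducibleSpecializations k (Algebra.adjoin k (Set.range v)) :=
  (hk.hasIrreducibleSpecializations_mvPolynomial Nat.card_pos).of_algEquiv
    ((MvPolynomial.renameEquiv k (Finite.equivFin ι).symm).trans hv.aevalEquiv)

open scoped IntermediateField.algebraAdjoinAdjoin in
theorem IsHilbertianField.exists_galEquiv_of_algebraicIndependent {k : Type} [Field k]
    (hk : IsHilbertianField k) {M : Type u} {ι : Type*} [Field M] [Algebra k M] [Finite ι]
    [Nonempty ι] {v : ι → M} (hv : AlgebraicIndependent k v) {F : IntermediateField k M}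
    (hF : F = IntermediateField.adjoin k (Set.range v)) [FiniteDimensional F M]
    [Algebra.IsSeparable F M] {L : Type*} [Field L] [Algebra k L] [Algebra.IsAlgebraic k L]
    (j : L →ₐ[k] M) :
    ∃ (E : Type u) (_ : Field E) (_ : Algebra k E), FiniteDimensional k E ∧
      Algebra.IsSeparable k E ∧ ∃ (ψ : L →ₐ[k] E) (Θ : Gal(M/F) ≃* Gal(E/k)),
        ∀ g l l', g (j l) = j l' → Θ g (ψ l) = ψ l' := by
  subst hF
  let A := Algebra.adjoin k (Set.range v)
  have : IsIntegrallyClosed A := .of_equiv hv.aevalEquiv.toRingEquiv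
  obtain ⟨E, _, _, hfin, hsep, φ, Θ, hφ⟩ := exists_specialization_of_isSeparable
    (F := IntermediateField.adjoin k (Set.range v)) (M := M)
    (hk.hasIrreducibleSpecializations_adjoin hv)
  have isIntegral_j (l : L) : IsIntegral A (j l) :=
    ((Algebra.IsIntegral.isIntegral (R := k) l).map j).tower_top
  let jA : L →ₐ[k] integralClosure A M :=
    j.codRestrict ((integralClosure A M).restrictScalars k) isIntegral_j
  refine ⟨E, _, _, hfin, hsep, φ.comp jA, Θ, fun g l l' h ↦ ?_⟩
  exact (hφ g (jA l)).symm.trans (congrArg φ (Subtype.ext h))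

theorem exists_intermediateField_algEquiv {k K E : Type*} [Field k] [Field K] [Algebra k K]
    [IsAlgClosed K] [Field E] [Algebra k E] [Algebra.IsAlgebraic k E]
    {L : IntermediateField k K} (ψ : L →ₐ[k] E) :
    ∃ (E' : IntermediateField k K) (_ : L ≤ E') (e : E ≃ₐ[k] E'), ∀ x, (e (ψ x) : K) = x := by
  let _ : Algebra L E := ψ.toRingHom.toAlgebra
  have : IsScalarTower k L E := .of_algebraMap_eq fun x ↦ (ψ.commutes x).symm
  have : Algebra.IsAlgebraic L E := .tower_top (K := k) L
  let i : E →ₐ[L] K := IsAlgClosed.lift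
  have i_ψ (x : L) : i (ψ x) = x := i.commutes x
  let i' : E →ₐ[k] K := i.restrictScalars k
  exact ⟨i'.fieldRange, fun x hx ↦ ⟨ψ ⟨x, hx⟩, i_ψ _⟩, .ofInjectiveField i', i_ψ⟩

theorem statement_2_general {k : Type} [Field k] (hk : IsHilbertianField k)
    {K G : Type*} [Field K] [Algebra k K] [IsAlgClosed K] [Group G] [Finite G]
    (L : IntermediateField k K) [FiniteDimensional k L] [Algebra.IsSeparable k L]
    (α : G →* Gal(L/k)) :
    ∃ (E : IntermediateField k K) (hLE : L ≤ E),
      FiniteDimensional k E ∧ Algebra.IsSeparable k E ∧ ∃ β : Gal(E/k) ≃* G,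
        ∀ (σ : Gal(E/k)) (x : K) (hx : x ∈ L), (σ ⟨x, hLE hx⟩ : K) = α (β σ) ⟨x, hx⟩ := by
  obtain ⟨M, _, _, ι, _, _, v, F, hv, hF, _, _, j, e, he⟩ :=
    exists_galEquiv_adjoin_algebraicIndependent α
  obtain ⟨N, _, _, _, _, ψ, Θ, hΘ⟩ := hk.exists_galEquiv_of_algebraicIndependent hv hF j
  obtain ⟨E, hLE, i, hi⟩ := exists_intermediateField_algEquiv ψ
  refine ⟨E, hLE, i.toLinearEquiv.finiteDimensional, .of_algHom k N i.symm.toAlgHom,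
    (e.trans (Θ.trans i.autCongr)).symm, fun σ x hx ↦ ?_⟩
  obtain ⟨g, rfl⟩ := (e.trans (Θ.trans i.autCongr)).surjective σ
  rw [MulEquiv.symm_apply_apply]
  have i_ψ : i (ψ ⟨x, hx⟩) = ⟨x, hLE hx⟩ := Subtype.ext (hi _)
  have Θ_ψ := hΘ (e g) _ _ (he g ⟨x, hx⟩)
  rw [← i_ψ, ← hi, ← Θ_ψ]
  change (i (Θ (e g) (i.symm (i _))) : K) = _
  rw [i.symm_apply_apply]

/-- **Every finite embedding problem over a Hilbertian field has a solution.**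
For every finite group `G`, finite separable extension `L/k` (inside a fixed algebraic
closure of `k`) and surjective homomorphism `α : G → Aut(L/k)`, there are a finite
separable extension `E/k` with `L ⊆ E` and an isomorphism `β : Aut(E/k) ≃ G` such that
every `σ ∈ Aut(E/k)` maps `L` onto itself and `σ|_L = α (β σ)`. -/
theorem statement_2 (k : Type) [Field k] (hk : IsHilbertianField k)
    (G : Type) [Group G] [Finite G]
    (L : IntermediateField k (AlgebraicClosure k))
    [FiniteDimensional k L] [Algebra.IsSeparable k L]
    (α : G →* (L ≃ₐ[k] L)) (hα : Function.Surjective α) :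
    ∃ (E : IntermediateField k (AlgebraicClosure k)) (hLE : L ≤ E),
      FiniteDimensional k E ∧ Algebra.IsSeparable k E ∧
      ∃ β : (E ≃ₐ[k] E) ≃* G,
        ∀ (σ : E ≃ₐ[k] E) (x : AlgebraicClosure k) (hx : x ∈ L),
          ((σ ⟨x, hLE hx⟩ : E) : AlgebraicClosure k) =
            ((α (β σ) ⟨x, hx⟩ : L) : AlgebraicClosure k) :=
  statement_2_general hk L α
end

section
/- Let k be a Hilbertian field, L/k a finite Galois extension, G a finite group, and α : G → Gal(L/k) a surjective group homomorphism admitting a group-theoretic section. Then there exist a finite separable extension F of L and an isomorphism β : Aut(F/k) → G such that every σ ∈ Aut(F/k) maps L onto itself and σ|_L = α(β(σ)). -/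
set_option synthInstance.maxHeartbeats 1000000
set_option maxHeartbeats 1000000

/-!
Hilbert specialization turns a finite extension `A / R` of domains, where `R` is a polynomial ring
over `k`, into a finite separable extension `F / k` with the same automorphism group: one applies
Hilbert irreducibility to a primitive element of the Galois closure of `Frac A / Frac R`, and the
correspondence of subgroups with intermediate fields, together with that of automorphisms with
cosets of the normalizer, passes to the specialization.

This is used twice. First, let `G` act on `L[X_g | g ∈ G]` through `α` on the coefficients and by
translation on the variables. The action fixes the elementary symmetric functions of the `X_g`, over
which the ring is finite, so a specialization yields a finite separable `M ⊇ L` and an injection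
`j : G → Aut(M/k)` lifting `α`. Secondly, choose `θ ∈ M` with stabilizer `j(G)` in `Aut(M/k)`. Over
`k[Y, Z]`, where `Z = X³ + Y(X - θ)`, every automorphism of `M[X, Y]` preserves `M`; it moves
neither `X` nor `θ`, since `w³ + Y(w - θ') = X³ + Y(X - θ)` forces `w = X` and `θ' = θ`. The
automorphism group is therefore exactly `G`, and a specialization yields `F`.
-/

open Polynomial

/-- `R` has Hilbert's irreducibility property over `k`: every monic separable irreducible polynomial
over `R` stays irreducible and separable under some specialization `R → k`.  For integrally closed
`R`, being irreducible over `R` or over its fraction field is the same for monic polynomials, and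
separability of an irreducible polynomial is non-vanishing of its derivative. -/
def HilbertSpecialization (k R : Type*) [Field k] [CommRing R] [Algebra k R] : Prop :=
  ∀ P : R[X], P.Monic → Irreducible P → derivative P ≠ 0 →
    ∃ t : R →ₐ[k] k, Irreducible (P.map (t : R →+* k)) ∧ (P.map (t : R →+* k)).Separable

namespace HilbertSpecialization

theorem mvPolynomial {k : Type} [Field k] (hk : IsHilbertianField k) {n : ℕ} (hn : 0 < n) :
    HilbertSpecialization k (MvPolynomial (Fin n) k) := by
  intro P hmonic hirr hder
  have hinj := IsFractionRing.injective (MvPolynomial (Fin n) k)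
    (FractionRing (MvPolynomial (Fin n) k))
  have hirr' := (hmonic.irreducible_iff_irreducible_map_fraction_map
    (K := FractionRing (MvPolynomial (Fin n) k))).1 hirr
  have hsep := (separable_iff_derivative_ne_zero hirr').2 <| by
    rwa [derivative_map, Ne, Polynomial.map_eq_zero_iff hinj]
  obtain ⟨t, -, ht⟩ := hk n hn 1 (fun _ => P) 1 one_ne_zero fun _ => ⟨hirr', hsep⟩
  have heval : (MvPolynomial.aeval t : MvPolynomial (Fin n) k →ₐ[k] k) = MvPolynomial.eval t :=
    MvPolynomial.coe_aeval_eq_eval t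
  exact ⟨MvPolynomial.aeval t, by rw [heval]; exact ht 0⟩

theorem of_algEquiv {k R R' : Type*} [Field k] [CommRing R] [CommRing R'] [Algebra k R]
    [Algebra k R'] (h : HilbertSpecialization k R) (e : R ≃ₐ[k] R') :
    HilbertSpecialization k R' := by
  intro P hmonic hirr hder
  obtain ⟨t, ht⟩ := h (P.map (e.symm : R' →+* R)) (hmonic.map _)
    ((MulEquiv.irreducible_iff (mapEquiv e.symm.toRingEquiv)).2 hirr)
    (by rwa [derivative_map, Ne, Polynomial.map_eq_zero_iff e.symm.injective])
  refine ⟨t.comp e.symm, ?_⟩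
  rwa [map_map] at ht

end HilbertSpecialization

section Extension

theorem exists_algHom_extending {k M R S Ω : Type*} [Field k] [Field M] [CommRing R] [CommRing S]
    [Field Ω] [IsAlgClosed Ω] [Algebra k M] [Algebra k R] [Algebra R S] [Algebra k S]
    [Algebra M S] [Algebra k Ω] [Algebra M Ω] [IsScalarTower k R S] [IsScalarTower k M S]
    [IsScalarTower k M Ω] [FaithfulSMul R S] [Algebra.IsIntegral R S] (t : R →ₐ[k] k) :
    ∃ φ : S →ₐ[M] Ω, ∀ r, φ (algebraMap R S r) = algebraMap k Ω (t r) := by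
  have := RingHom.ker_isPrime t
  obtain ⟨Q, -, hQ, hQt⟩ := Ideal.exists_ideal_over_prime_of_isIntegral (S := S) (RingHom.ker t) ⊥
    (((RingHom.injective_iff_ker_eq_bot _).1 (FaithfulSMul.algebraMap_injective R S)).trans_le
      bot_le)
  have hmk (r : R) : Ideal.Quotient.mk Q (algebraMap R S r) = algebraMap k (S ⧸ Q) (t r) := by
    rw [IsScalarTower.algebraMap_apply k S (S ⧸ Q), Ideal.Quotient.algebraMap_eq,
      Ideal.Quotient.eq, IsScalarTower.algebraMap_apply k R S, ← map_sub, ← Ideal.mem_comap, hQt]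
    simp
  have hint : (algebraMap k (S ⧸ Q)).IsIntegral := by
    refine RingHom.IsIntegral.tower_top (t : R →+* k) _ ?_
    rw [← show (Ideal.Quotient.mk Q).comp (algebraMap R S) = (algebraMap k (S ⧸ Q)).comp t from
      RingHom.ext hmk]
    exact algebraMap_isIntegral_iff.2 ‹_› |>.trans _ _
      (RingHom.isIntegral_of_surjective _ Ideal.Quotient.mk_surjective)
  have : Algebra.IsIntegral k (S ⧸ Q) := algebraMap_isIntegral_iff.1 hint
  have : Algebra.IsAlgebraic M (S ⧸ Q) := Algebra.IsAlgebraic.tower_top (K := k) M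
  let ψ : (S ⧸ Q) →ₐ[M] Ω := IsAlgClosed.lift
  refine ⟨ψ.comp (Ideal.Quotient.mkₐ M Q), fun r => ?_⟩
  rw [AlgHom.comp_apply, Ideal.Quotient.mkₐ_eq_mk, hmk, ← AlgHom.restrictScalars_apply k,
    AlgHom.commutes]

end Extension

section Charpoly

variable {R S E : Type*} [CommRing R] [CommRing S] [Algebra R S] [Group E] [Fintype E]
  [MulSemiringAction E S]

open MulSemiringAction (charpoly)

variable (R) in
theorem exists_map_eq_charpoly [Algebra.IsInvariant R S E] [FaithfulSMul R S] (z : S) :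
    ∃ P : R[X], P.Monic ∧ P.map (algebraMap R S) = charpoly E z := by
  obtain ⟨P, hP⟩ := (mem_lifts _).1 (Algebra.IsInvariant.charpoly_mem_lifts R S E z)
  refine ⟨P, monic_of_injective (FaithfulSMul.algebraMap_injective R S) ?_, hP⟩
  exact hP ▸ MulSemiringAction.monic_charpoly E z

theorem aeval_derivative_of_map_eq_charpoly [DecidableEq E] {z : S} {P : R[X]}
    (hPz : P.map (algebraMap R S) = charpoly E z) :
    aeval z (derivative P) = ∏ e ∈ Finset.univ.erase (1 : E), (z - e • z) := by
  rw [← eval_map_algebraMap, ← derivative_map, hPz, MulSemiringAction.charpoly_eq,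
    ← Finset.mul_prod_erase _ _ (Finset.mem_univ 1), one_smul]
  simp [derivative_mul, eval_prod]

theorem derivative_ne_zero_of_map_eq_charpoly [IsDomain S] {z : S}
    (hz : Function.Injective fun e : E => e • z) {P : R[X]}
    (hPz : P.map (algebraMap R S) = charpoly E z) : derivative P ≠ 0 := by
  classical
  intro hder
  have hprod := aeval_derivative_of_map_eq_charpoly hPz
  rw [hder, map_zero, eq_comm, Finset.prod_eq_zero_iff] at hprod
  obtain ⟨e, he, hez⟩ := hprod
  refine Finset.ne_of_mem_erase he (hz ?_)
  simpa [eq_comm] using sub_eq_zero.1 hez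

-- Lagrange interpolation at the conjugates of `z`, with the denominators cleared.
theorem exists_aeval_eq_mul_aeval_derivative [Algebra.IsInvariant R S E] {z : S} {P : R[X]}
    (hPz : P.map (algebraMap R S) = charpoly E z) (s : S) :
    ∃ q : R[X], aeval z q = s * aeval z (derivative P) := by
  classical
  let N : S[X] := ∏ e ∈ Finset.univ.erase (1 : E), (X - C (e • z))
  have hNz : N.eval z = aeval z (derivative P) := by
    simp [N, eval_prod, aeval_derivative_of_map_eq_charpoly hPz]
  have hNe {e : E} (he : e ≠ 1) : (e • (C s * N)).eval z = 0 := by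
    rw [smul_eval, eval_mul, eval_prod, Finset.prod_eq_zero (i := e⁻¹) (by simpa using he)]
    · simp
    · simp
  have hinv (f : E) : f • ∑ e : E, e • (C s * N) = ∑ e : E, e • (C s * N) := by
    rw [Finset.smul_sum]
    exact Fintype.sum_equiv (Equiv.mulLeft f) _ _ fun e => (mul_smul f e _).symm
  obtain ⟨q, hq⟩ := (mem_lifts _).1 <| (lifts_iff_coeff_lifts (f := algebraMap R S) _).2 fun n =>
    Algebra.IsInvariant.isInvariant (G := E) _ fun f => by rw [← coeff_smul, hinv f]
  refine ⟨q, ?_⟩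
  rw [← eval_map_algebraMap, hq, eval_finsetSum, Finset.sum_eq_single_of_mem 1 (Finset.mem_univ 1)
    fun e _ => hNe, one_smul, eval_mul, eval_C, hNz]

variable [SMulCommClass E R S]

theorem card_le_natDegree_of_aeval_eq_zero [IsDomain S] {z : S}
    (hz : Function.Injective fun e : E => e • z) {f : R[X]} (hf : f.Monic) (hfz : aeval z f = 0) :
    Fintype.card E ≤ f.natDegree := by
  classical
  rw [← Finset.card_univ, ← Finset.card_image_of_injective _ hz]
  refine (card_le_degree_of_subset_roots (p := f.map (algebraMap R S)) fun x hx => ?_).trans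
    natDegree_map_le
  obtain ⟨e, -, rfl⟩ := Finset.mem_image.1 hx
  rw [mem_roots (hf.map (algebraMap R S)).ne_zero, IsRoot.def, eval_map_algebraMap, aeval_smul,
    hfz, smul_zero]

theorem irreducible_of_map_eq_charpoly [IsDomain R] [IsDomain S] [FaithfulSMul R S] {z : S}
    (hz : Function.Injective fun e : E => e • z) {P : R[X]} (hP : P.Monic)
    (hPz : P.map (algebraMap R S) = charpoly E z) : Irreducible P := by
  have hroot : aeval z P = 0 := by
    rw [← eval_map_algebraMap, hPz, MulSemiringAction.eval_charpoly]
  have hdeg : P.natDegree = Fintype.card E := by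
    rw [← natDegree_map_eq_of_injective (FaithfulSMul.algebraMap_injective R S) P, hPz,
      MulSemiringAction.charpoly_eq, natDegree_finsetProd_X_sub_C_eq_card, Finset.card_univ]
  refine (hP.irreducible_iff_natDegree).2 ⟨?_, fun f g hf hg hfg => ?_⟩
  · rintro rfl
    simp at hroot
  · have hadd : f.natDegree + g.natDegree = Fintype.card E := by
      rw [← hdeg, ← hfg, hf.natDegree_mul hg]
    rw [← hfg, map_mul, mul_eq_zero] at hroot
    rcases hroot with hfz | hgz
    · have := card_le_natDegree_of_aeval_eq_zero hz hf hfz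
      lia
    · have := card_le_natDegree_of_aeval_eq_zero hz hg hgz
      lia

end Charpoly

/-- A homomorphism `φ : S → Ω` is a Galois specialization, for a group `E` acting on `S`, if its
image is separable over `k` and the automorphisms of `Ω / k` act on this image through `φ` exactly
like `E` acts on `S`: the decomposition group of `φ` is all of `E` and its inertia group is
trivial. -/
structure IsGaloisSpecialization (E : Type*) {k S Ω : Type*} [Field k] [CommRing S] [Field Ω]
    [Algebra k S] [Algebra k Ω] [Group E] [MulSemiringAction E S] (φ : S →ₐ[k] Ω) : Prop where
  exists_smul (T : Ω ≃ₐ[k] Ω) : ∃ e : E, ∀ s, T (φ s) = φ (e • s)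
  exists_algEquiv (e : E) : ∃ T : Ω ≃ₐ[k] Ω, ∀ s, T (φ s) = φ (e • s)
  exists_injective : ∃ z : S, Function.Injective fun e : E => φ (e • z)
  isSeparable (s : S) : IsSeparable k (φ s)

section GaloisSpecialization

open MulSemiringAction (charpoly)

variable {k R S E Ω : Type*} [Field k] [CommRing R] [CommRing S] [Field Ω] [Algebra k R]
  [Algebra k S] [Algebra k Ω] [Algebra R S] [Group E] [MulSemiringAction E S]
  {t : R →ₐ[k] k} {φ : S →ₐ[k] Ω} {z : S} {P : R[X]}

theorem map_aeval_of_extending (hφ : ∀ r, φ (algebraMap R S r) = algebraMap k Ω (t r))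
    (q : R[X]) (s : S) : φ (aeval s q) = aeval (φ s) (q.map (t : R →+* k)) :=
  map_aeval_eq_aeval_map (ψ := (φ : S →+* Ω)) (RingHom.ext fun r => (hφ r).symm) q s

variable [Fintype E]

theorem map_map_eq_prod_of_extending (hφ : ∀ r, φ (algebraMap R S r) = algebraMap k Ω (t r))
    (hPz : P.map (algebraMap R S) = charpoly E z) :
    (P.map (t : R →+* k)).map (algebraMap k Ω) = ∏ e : E, (X - C (φ (e • z))) := by
  have hcomp : (algebraMap k Ω).comp (t : R →+* k) = (φ : S →+* Ω).comp (algebraMap R S) :=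
    RingHom.ext fun r => (hφ r).symm
  rw [map_map, hcomp, ← map_map, hPz, MulSemiringAction.charpoly_eq, Polynomial.map_prod]
  simp

theorem aeval_map_eq_zero_of_extending
    (hφ : ∀ r, φ (algebraMap R S r) = algebraMap k Ω (t r))
    (hPz : P.map (algebraMap R S) = charpoly E z) : aeval (φ z) (P.map (t : R →+* k)) = 0 := by
  rw [← map_aeval_of_extending hφ, ← eval_map_algebraMap, hPz, MulSemiringAction.eval_charpoly,
    map_zero]

variable [Algebra.IsInvariant R S E]

theorem exists_eq_aeval_div_aeval_derivative (hPz : P.map (algebraMap R S) = charpoly E z)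
    (hsep : (P.map (t : R →+* k)).Separable) (s : S) :
    ∃ q : k[X], ∀ φ : S →ₐ[k] Ω, (∀ r, φ (algebraMap R S r) = algebraMap k Ω (t r)) →
      φ s = aeval (φ z) q / aeval (φ z) (derivative (P.map (t : R →+* k))) := by
  obtain ⟨q, hq⟩ := exists_aeval_eq_mul_aeval_derivative hPz s
  refine ⟨q.map (t : R →+* k), fun φ hφ => ?_⟩
  rw [eq_div_iff (hsep.aeval_derivative_ne_zero (aeval_map_eq_zero_of_extending hφ hPz)),
    derivative_map, ← map_aeval_of_extending hφ, ← map_aeval_of_extending hφ, hq, map_mul]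

theorem isSeparable_of_extending (hφ : ∀ r, φ (algebraMap R S r) = algebraMap k Ω (t r))
    (hPz : P.map (algebraMap R S) = charpoly E z) (hsep : (P.map (t : R →+* k)).Separable)
    (s : S) : IsSeparable k (φ s) := by
  have hsepz : IsSeparable k (φ z) :=
    hsep.of_dvd (minpoly.dvd k _ (aeval_map_eq_zero_of_extending hφ hPz))
  have := (IntermediateField.isSeparable_adjoin_simple_iff_isSeparable k Ω).2 hsepz
  obtain ⟨q, hq⟩ := exists_eq_aeval_div_aeval_derivative (Ω := Ω) hPz hsep s
  exact IntermediateField.isSeparable_of_mem_isSeparable k Ω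
    ((IntermediateField.mem_adjoin_simple_iff k _).2 ⟨q, _, hq φ hφ⟩)

variable [SMulCommClass E R S] [SMulCommClass E k S]

theorem isGaloisSpecialization_of_extending [Normal k Ω]
    (hφ : ∀ r, φ (algebraMap R S r) = algebraMap k Ω (t r)) (hP : P.Monic)
    (hPz : P.map (algebraMap R S) = charpoly E z) (hirr : Irreducible (P.map (t : R →+* k)))
    (hsep : (P.map (t : R →+* k)).Separable) : IsGaloisSpecialization E φ := by
  have hprod := map_map_eq_prod_of_extending hφ hPz
  have hroot (e : E) : aeval (φ (e • z)) (P.map (t : R →+* k)) = 0 := by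
    rw [← eval_map_algebraMap, hprod, eval_prod]
    exact Finset.prod_eq_zero (Finset.mem_univ e) (by simp)
  have hsmul (T : Ω ≃ₐ[k] Ω) (e : E) (h : T (φ z) = φ (e • z)) (s : S) : T (φ s) = φ (e • s) := by
    obtain ⟨q, hq⟩ := exists_eq_aeval_div_aeval_derivative (Ω := Ω) hPz hsep s
    have hT := hq ((T : Ω →ₐ[k] Ω).comp φ) fun r => by simp [hφ]
    have he := hq (φ.comp (MulSemiringAction.toAlgHom k S e)) fun r => by simp [hφ]
    simp only [AlgHom.comp_apply, AlgEquiv.coe_toAlgHom, MulSemiringAction.toAlgHom_apply] at hT he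
    rw [hT, he, h]
  refine ⟨fun T => ?_, fun e => ?_, ⟨z, ?_⟩, isSeparable_of_extending hφ hPz hsep⟩
  · have hT : ∏ e : E, (T (φ z) - φ (e • z)) = 0 := by
      have hTroot : aeval (T (φ z)) (P.map (t : R →+* k)) = 0 := by
        rw [← AlgEquiv.coe_toAlgHom, aeval_algHom_apply, aeval_map_eq_zero_of_extending hφ hPz,
          map_zero]
      rw [← eval_map_algebraMap, hprod, eval_prod] at hTroot
      simpa using hTroot
    obtain ⟨e, -, he⟩ := Finset.prod_eq_zero_iff.1 hT
    exact ⟨e, hsmul T e (sub_eq_zero.1 he)⟩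
  · have hminpoly (x : Ω) (hx : aeval x (P.map (t : R →+* k)) = 0) :=
      minpoly.eq_of_irreducible_of_monic hirr hx (hP.map _)
    have hconj : IsConjRoot k (φ (e • z)) (φ z) :=
      (hminpoly _ (hroot e)).symm.trans (hminpoly _ (aeval_map_eq_zero_of_extending hφ hPz))
    obtain ⟨T, hT⟩ := isConjRoot_iff_exists_algEquiv.1 hconj
    exact ⟨T, hsmul T e hT⟩
  · rw [← separable_prod_X_sub_C_iff, ← hprod]
    exact hsep.map

end GaloisSpecialization

theorem HilbertSpecialization.exists_isGaloisSpecialization {k R : Type*} (M : Type*) {S E : Type*}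
    (Ω : Type*) [Field k] [Field M] [CommRing R] [IsDomain R] [CommRing S] [IsDomain S] [Field Ω]
    [Algebra k M] [Algebra k R] [Algebra R S] [Algebra k S] [Algebra M S] [Algebra k Ω]
    [Algebra M Ω] [IsScalarTower k R S] [IsScalarTower k M S] [IsScalarTower k M Ω]
    [FaithfulSMul R S] [IsAlgClosure k Ω] [Group E] [Finite E] [MulSemiringAction E S]
    [SMulCommClass E R S] [Algebra.IsInvariant R S E]
    (hR : HilbertSpecialization k R) {z : S} (hz : Function.Injective fun e : E => e • z) :
    ∃ φ : S →ₐ[M] Ω, IsGaloisSpecialization E (φ.restrictScalars k) := by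
  have := Fintype.ofFinite E
  have := IsAlgClosure.isAlgClosed k (K := Ω)
  have := IsAlgClosure.normal k Ω
  have := Algebra.IsInvariant.isIntegral R S E
  have : SMulCommClass E k S := ⟨fun e c s => by
    simp only [← algebraMap_smul R c, smul_comm]⟩
  obtain ⟨P, hP, hPz⟩ := exists_map_eq_charpoly (E := E) R z
  obtain ⟨t, hirr, hsep⟩ := hR P hP (irreducible_of_map_eq_charpoly hz hP hPz)
    (derivative_ne_zero_of_map_eq_charpoly hz hPz)
  obtain ⟨φ, hφ⟩ := exists_algHom_extending (M := M) (S := S) (Ω := Ω) t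
  exact ⟨φ, isGaloisSpecialization_of_extending hφ hP hPz hirr hsep⟩

namespace IsGaloisSpecialization

variable {k R A S E Ω : Type*} [Field k] [CommRing A] [CommRing S] [Field Ω] [Algebra k S]
  [Algebra k Ω] [Algebra A S] [Group E] [Finite E] [MulSemiringAction E S] {φ : S →ₐ[k] Ω}

theorem mem_subgroup_of_apply_smul_eq (H : Subgroup E) [Algebra.IsInvariant A S H]
    (hφ : IsGaloisSpecialization E φ) {e : E}
    (he : ∀ a : A, φ (e • algebraMap A S a) = φ (algebraMap A S a)) : e ∈ H := by
  have := Fintype.ofFinite H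
  obtain ⟨z, hz⟩ := hφ.exists_injective
  obtain ⟨q, hq⟩ := (mem_lifts _).1 (Algebra.IsInvariant.charpoly_mem_lifts A S H z)
  have hcoeff : ((φ : S →+* Ω).comp (MulSemiringAction.toRingHom E S e)).comp (algebraMap A S) =
      (φ : S →+* Ω).comp (algebraMap A S) := RingHom.ext he
  have hroot : ∏ h : H, (φ (e • z) - φ ((h : E) • z)) = 0 :=
    calc ∏ h : H, (φ (e • z) - φ ((h : E) • z))
        = eval₂ (φ : S →+* Ω) (φ (e • z)) (MulSemiringAction.charpoly H z) := by
          simp [MulSemiringAction.charpoly_eq, eval₂_finsetProd, Subgroup.smul_def]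
      _ = eval₂ ((φ : S →+* Ω).comp (MulSemiringAction.toRingHom E S e)) (φ (e • z))
            (MulSemiringAction.charpoly H z) := by
          rw [← hq, eval₂_map, eval₂_map, hcoeff]
      _ = φ (e • eval z (MulSemiringAction.charpoly H z)) :=
          (hom_eval₂ _ (.id S) ((φ : S →+* Ω).comp (MulSemiringAction.toRingHom E S e)) z).symm
      _ = 0 := by rw [MulSemiringAction.eval_charpoly, smul_zero, map_zero]
  obtain ⟨h, -, hh⟩ := Finset.prod_eq_zero_iff.1 hroot
  exact hz (sub_eq_zero.1 hh) ▸ h.2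

theorem exists_algebraMap_eq_smul (H : Subgroup E) [Algebra.IsInvariant A S H] [SMulCommClass H A S]
    (hφ : IsGaloisSpecialization E φ) {T : Ω ≃ₐ[k] Ω} {e : E}
    (hT : ∀ s, T (φ s) = φ (e • s))
    (hTA : ∀ a : A, ∃ b : A, T (φ (algebraMap A S a)) = φ (algebraMap A S b)) (a : A) :
    ∃ b : A, algebraMap A S b = e • algebraMap A S a := by
  refine Algebra.IsInvariant.isInvariant (G := H) _ fun h => ?_
  suffices hconj : e⁻¹ * h * e ∈ H by
    have hfix : (e⁻¹ * h * e) • algebraMap A S a = algebraMap A S a :=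
      smul_algebraMap (⟨_, hconj⟩ : H) a
    rw [mul_smul, mul_smul, inv_smul_eq_iff] at hfix
    exact hfix
  refine hφ.mem_subgroup_of_apply_smul_eq (A := A) H fun b => T.injective ?_
  obtain ⟨Th, hTh⟩ := hφ.exists_algEquiv (h : E)
  obtain ⟨c, hc⟩ := hTA b
  calc T (φ ((e⁻¹ * h * e) • algebraMap A S b))
      = Th (T (φ (algebraMap A S b))) := by rw [hT, hT, hTh, mul_smul, mul_smul, smul_inv_smul]
    _ = φ (h • algebraMap A S c) := by rw [hc, hTh, Subgroup.smul_def]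
    _ = T (φ (algebraMap A S b)) := by rw [smul_algebraMap, hc]

variable [FaithfulSMul A S] [CommRing R] [Algebra R A]

theorem algEquiv_eq_of_apply_eq (H : Subgroup E) [Algebra.IsInvariant A S H] [SMulCommClass H A S]
    (hφ : IsGaloisSpecialization E φ)
    (hlift : ∀ σ : A ≃ₐ[R] A, ∃ e : E, ∀ a, algebraMap A S (σ a) = e • algebraMap A S a)
    {σ σ' : A ≃ₐ[R] A} (h : ∀ a, φ (algebraMap A S (σ a)) = φ (algebraMap A S (σ' a))) :
    σ = σ' := by
  obtain ⟨e, he⟩ := hlift (σ * σ'⁻¹)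
  have heH : e ∈ H := hφ.mem_subgroup_of_apply_smul_eq (A := A) H fun a => by
    rw [← he, AlgEquiv.mul_apply, h, ← AlgEquiv.mul_apply, mul_inv_cancel, AlgEquiv.one_apply]
  rw [← mul_inv_eq_one]
  ext a
  refine FaithfulSMul.algebraMap_injective A S ?_
  rw [he, AlgEquiv.one_apply]
  exact smul_algebraMap (⟨e, heH⟩ : H) a

theorem exists_algEquiv_of_mapsTo (H : Subgroup E) [Algebra.IsInvariant A S H] [SMulCommClass H A S]
    [Algebra R S] [IsScalarTower R A S] [SMulCommClass E R S]
    (hφ : IsGaloisSpecialization E φ) {T : Ω ≃ₐ[k] Ω}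
    (hTA : ∀ a : A, ∃ b : A, T (φ (algebraMap A S a)) = φ (algebraMap A S b)) :
    ∃ σ : A ≃ₐ[R] A, ∀ a, T (φ (algebraMap A S a)) = φ (algebraMap A S (σ a)) := by
  obtain ⟨e, he⟩ := hφ.exists_smul T
  have hsmul (a : A) := hφ.exists_algebraMap_eq_smul H he hTA a
  let incl : A →ₐ[R] S := IsScalarTower.toAlgHom R A S
  let toRange : A ≃ₐ[R] incl.range :=
    AlgEquiv.ofInjective incl (FaithfulSMul.algebraMap_injective A S)
  let σ : A →ₐ[R] A := (toRange.symm : incl.range →ₐ[R] A).comp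
    (((MulSemiringAction.toAlgHom R S e).comp incl).codRestrict incl.range hsmul)
  have hσ (a : A) : algebraMap A S (σ a) = e • algebraMap A S a :=
    congrArg Subtype.val (toRange.apply_symm_apply ⟨_, hsmul a⟩)
  have hiter (n : ℕ) (a : A) : algebraMap A S (σ^[n] a) = e ^ n • algebraMap A S a := by
    induction n with
    | zero => simp
    | succ n ih => rw [Function.iterate_succ_apply', hσ, ih, pow_succ', mul_smul]
  have hinv (a : A) : σ^[orderOf e] a = a := FaithfulSMul.algebraMap_injective A S <| by
    rw [hiter, pow_orderOf_eq_one, one_smul]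
  have hbij : Function.Bijective σ := by
    refine Function.bijective_iff_has_inverse.2 ⟨σ^[orderOf e - 1], fun a => ?_, fun a => ?_⟩
    · rw [← Function.iterate_succ_apply, Nat.succ_eq_add_one,
        Nat.sub_add_cancel (orderOf_pos e), hinv]
    · rw [← Function.iterate_succ_apply' σ, Nat.succ_eq_add_one,
        Nat.sub_add_cancel (orderOf_pos e), hinv]
  exact ⟨AlgEquiv.ofBijective σ hbij, fun a => by rw [he, AlgEquiv.coe_ofBijective, hσ]⟩

theorem exists_mulEquiv [Normal k Ω] (H : Subgroup E) [Algebra.IsInvariant A S H]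
    [SMulCommClass H A S] [Algebra R S] [IsScalarTower R A S] [SMulCommClass E R S]
    (hφ : IsGaloisSpecialization E φ)
    (hlift : ∀ σ : A ≃ₐ[R] A, ∃ e : E, ∀ a, algebraMap A S (σ a) = e • algebraMap A S a)
    {F : IntermediateField k Ω} (hF : ∀ x, x ∈ F ↔ ∃ a, φ (algebraMap A S a) = x) :
    ∃ β : (F ≃ₐ[k] F) ≃* (A ≃ₐ[R] A), ∀ (τ : F ≃ₐ[k] F) (x : F) (a : A),
      φ (algebraMap A S a) = x → φ (algebraMap A S (β τ a)) = τ x := by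
  have hexists (τ : F ≃ₐ[k] F) : ∃ σ : A ≃ₐ[R] A, ∀ (x : F) (a : A),
      φ (algebraMap A S a) = x → φ (algebraMap A S (σ a)) = τ x := by
    have hT (x : F) : τ.liftNormal Ω x = τ x := τ.liftNormal_commutes Ω x
    obtain ⟨σ, hσ⟩ := hφ.exists_algEquiv_of_mapsTo (R := R) H (T := τ.liftNormal Ω) fun a => by
      obtain ⟨b, hb⟩ := (hF _).1 (τ ⟨_, (hF _).2 ⟨a, rfl⟩⟩).2
      exact ⟨b, (hT ⟨_, (hF _).2 ⟨a, rfl⟩⟩).trans hb.symm⟩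
    exact ⟨σ, fun x a hx => by rw [← hσ, hx, hT]⟩
  choose β hβ using hexists
  have hinj : Function.Injective β := fun τ τ' h => by
    ext x
    obtain ⟨a, ha⟩ := (hF _).1 x.2
    rw [← hβ τ x a ha, h, hβ τ' x a ha]
  have hmul (τ τ' : F ≃ₐ[k] F) : β (τ * τ') = β τ * β τ' :=
    hφ.algEquiv_eq_of_apply_eq H hlift fun a => by
      let x : F := ⟨_, (hF _).2 ⟨a, rfl⟩⟩
      rw [hβ _ x a rfl, AlgEquiv.mul_apply, AlgEquiv.mul_apply, hβ _ (τ' x) _ (hβ _ x a rfl)]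
  have hsurj : Function.Surjective β := fun σ => by
    obtain ⟨e, he⟩ := hlift σ
    obtain ⟨T, hT⟩ := hφ.exists_algEquiv e
    have hTF (a : A) : T (φ (algebraMap A S a)) = φ (algebraMap A S (σ a)) := by rw [hT, he]
    have : Algebra.IsAlgebraic k F := inferInstance
    let τ : F →ₐ[k] F := ((T : Ω →ₐ[k] Ω).comp F.val).codRestrict F.toSubalgebra fun x => by
      obtain ⟨a, ha⟩ := (hF _).1 x.2
      exact (hF _).2 ⟨σ a, by simp [← ha, hTF]⟩
    refine ⟨AlgEquiv.ofBijective τ (Algebra.IsAlgebraic.algHom_bijective τ),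
      hφ.algEquiv_eq_of_apply_eq H hlift fun a => ?_⟩
    exact (hβ _ ⟨_, (hF _).2 ⟨a, rfl⟩⟩ a rfl).trans (hTF a)
  exact ⟨MulEquiv.ofBijective (MonoidHom.mk' β hmul) ⟨hinj, hsurj⟩, hβ⟩

end IsGaloisSpecialization

section IntegralClosure

variable {R A S K W : Type*} [CommRing R] [CommRing A] [CommRing S] [Field K] [Field W]
  [Algebra R K] [IsFractionRing R K] [Algebra K W] [Algebra S W] [MulSemiringAction Gal(W/K) S]
  [SMulDistribClass Gal(W/K) S W]

theorem exists_algebraMap_apply_eq_smul [IsDomain A] [Algebra R A] [Algebra A S] [Algebra A W]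
    [IsScalarTower A S W] [FaithfulSMul S W] [Normal K W] (L : Type*) [Field L]
    [Algebra A L] [IsFractionRing A L] [Algebra R L] [Algebra K L] [Algebra L W]
    [IsScalarTower R A L] [IsScalarTower R K L] [IsScalarTower A L W] [IsScalarTower K L W]
    (σ : A ≃ₐ[R] A) : ∃ e : Gal(W/K), ∀ a, algebraMap A S (σ a) = e • algebraMap A S a := by
  let σL : L ≃ₐ[K] L := IsFractionRing.fieldEquivOfAlgEquiv K L L σ
  refine ⟨σL.liftNormal W, fun a => FaithfulSMul.algebraMap_injective S W ?_⟩
  rw [algebraMap.smul', AlgEquiv.smul_def, ← IsScalarTower.algebraMap_apply A S W,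
    ← IsScalarTower.algebraMap_apply A S W, IsScalarTower.algebraMap_apply A L W,
    IsScalarTower.algebraMap_apply A L W, AlgEquiv.liftNormal_commutes,
    IsFractionRing.fieldEquivOfAlgEquiv_algebraMap]

variable (R) in
theorem exists_injective_smul [IsDomain R] [Algebra R W] [IsScalarTower R K W]
    [IsIntegralClosure S R W] [FiniteDimensional K W] [IsGalois K W] :
    ∃ z : S, Function.Injective fun e : Gal(W/K) => e • z := by
  obtain ⟨w, hw⟩ := Field.exists_primitive_element K W
  have hw' := (Field.primitive_element_iff_algHom_eq_of_eval' K W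
    (fun x => Normal.splits inferInstance x) w).1 hw
  have halg : IsAlgebraic R w :=
    (IsFractionRing.isAlgebraic_iff R K W).2 (Algebra.IsAlgebraic.isAlgebraic w)
  obtain ⟨r, z, hr, hz⟩ := halg.exists_smul_eq S
  have := FaithfulSMul.trans R K W
  refine ⟨z, fun e e' h => AlgEquiv.coe_toAlgHom_injective (hw' (smul_right_injective W hr ?_))⟩
  have hconj (e : Gal(W/K)) : r • e • w = algebraMap S W (e • z) := by
    rw [algebraMap.smul', ← hz, smul_comm]
  exact (hconj e).trans ((congrArg _ h).trans (hconj e').symm)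

end IntegralClosure

namespace HilbertSpecialization

variable {k M R A K L Ω : Type*} [Field k] [Field M] [CommRing R] [IsDomain R]
  [IsIntegrallyClosed R] [CommRing A] [IsDomain A] [IsIntegrallyClosed A] [Field K] [Field L]
  [Field Ω] [Algebra k M] [Algebra k R] [Algebra k A] [Algebra M A] [Algebra R A] [Algebra R K]
  [Algebra A L] [Algebra R L] [Algebra K L] [Algebra k Ω] [Algebra M Ω] [IsScalarTower k R A]
  [IsScalarTower k M A] [IsScalarTower k M Ω] [IsFractionRing R K] [IsFractionRing A L]
  [IsScalarTower R A L] [IsScalarTower R K L] [IsAlgClosure k Ω]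

variable (M K L Ω) in
theorem exists_algHom_of_isGalois (hR : HilbertSpecialization k R) {S W : Type*} [CommRing S]
    [IsDomain S] [Field W] [Algebra k S] [Algebra M S] [Algebra R S] [Algebra A S] [Algebra A W]
    [Algebra R W] [Algebra K W] [Algebra L W] [Algebra S W] [IsScalarTower k A S]
    [IsScalarTower M A S] [IsScalarTower R A S] [IsScalarTower R K W] [IsScalarTower R S W]
    [IsScalarTower A L W] [IsScalarTower A S W] [IsScalarTower K L W] [IsIntegralClosure S R W]
    [FiniteDimensional K W] [IsGalois K W] [MulSemiringAction Gal(W/K) S]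
    [SMulDistribClass Gal(W/K) S W] :
    ∃ ι : A →ₐ[M] Ω, (∀ a, IsSeparable k (ι a)) ∧ ∀ F : IntermediateField k Ω,
      (∀ x, x ∈ F ↔ ∃ a, ι a = x) → ∃ β : (F ≃ₐ[k] F) ≃* (A ≃ₐ[R] A),
        ∀ (τ : F ≃ₐ[k] F) (x : F) (a : A), ι a = x → ι (β τ a) = τ x := by
  have : IsFractionRing S W := IsIntegralClosure.isFractionRing_of_finite_extension R K W S
  have : Algebra.IsIntegral R S := IsIntegralClosure.isIntegral_algebra R W
  have : Algebra.IsIntegral A S := .tower_top R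
  have : IsGaloisGroup Gal(W/K) R S := .of_isFractionRing _ R S K W
  let H : Subgroup Gal(W/K) := fixingSubgroup _ (Set.range (algebraMap L W))
  have : IsGaloisGroup H L W := .of_isScalarTower _ K W L
  have : IsGaloisGroup H A S := .of_isFractionRing H A S L W
  have : FaithfulSMul A W := .trans A L W
  have : FaithfulSMul A S := .tower_bot A S W
  have : FaithfulSMul R W := .trans R K W
  have : FaithfulSMul R S := .tower_bot R S W
  have : IsScalarTower k M S := .to₁₂₄ k M A S
  have : IsScalarTower k R S := .to₁₂₄ k R A S
  have : Normal k Ω := IsAlgClosure.normal k Ω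
  obtain ⟨z, hz⟩ := exists_injective_smul R (K := K) (S := S) (W := W)
  obtain ⟨φ, hφ⟩ := hR.exists_isGaloisSpecialization M Ω hz
  exact ⟨φ.comp (IsScalarTower.toAlgHom M A S), fun a => hφ.isSeparable _,
    fun F hF => hφ.exists_mulEquiv H (exists_algebraMap_apply_eq_smul L) hF⟩

variable (M K L Ω) in
theorem exists_algHom (hR : HilbertSpecialization k R) [Algebra.IsIntegral R A]
    [FiniteDimensional K L] [Algebra.IsSeparable K L] :
    ∃ ι : A →ₐ[M] Ω, (∀ a, IsSeparable k (ι a)) ∧ ∀ F : IntermediateField k Ω,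
      (∀ x, x ∈ F ↔ ∃ a, ι a = x) → ∃ β : (F ≃ₐ[k] F) ≃* (A ≃ₐ[R] A),
        ∀ (τ : F ≃ₐ[k] F) (x : F) (a : A), ι a = x → ι (β τ a) = τ x := by
  have : Algebra.IsSeparable K (SeparableClosure L) := .trans K L _
  have : IsSepClosure K (SeparableClosure L) := ⟨inferInstance, inferInstance⟩
  let W := IntermediateField.normalClosure K L (SeparableClosure L)
  have : IsGalois K W := inferInstance
  let : Algebra R W := ((algebraMap K W).comp (algebraMap R K)).toAlgebra
  let : Algebra A W := ((algebraMap L W).comp (algebraMap A L)).toAlgebra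
  have : IsScalarTower R K W := .of_algebraMap_eq fun _ => rfl
  have : IsScalarTower A L W := .of_algebraMap_eq fun _ => rfl
  have : IsScalarTower R L W := .to₁₃₄ R K L W
  have : IsScalarTower R A W := .to₁₂₄ R A L W
  let : Algebra A (integralClosure R W) := ((IsScalarTower.toAlgHom R A W).codRestrict _
    fun a => (Algebra.IsIntegral.isIntegral a).map (IsScalarTower.toAlgHom R A W)).toAlgebra
  have : IsScalarTower A (integralClosure R W) W := .of_algebraMap_eq fun _ => rfl
  have : IsScalarTower R A (integralClosure R W) := .of_algebraMap_eq fun r =>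
    Subtype.ext (IsScalarTower.algebraMap_apply R A W r)
  let : Algebra k (integralClosure R W) :=
    ((algebraMap A (integralClosure R W)).comp (algebraMap k A)).toAlgebra
  let : Algebra M (integralClosure R W) :=
    ((algebraMap A (integralClosure R W)).comp (algebraMap M A)).toAlgebra
  have : IsScalarTower k A (integralClosure R W) := .of_algebraMap_eq fun _ => rfl
  have : IsScalarTower M A (integralClosure R W) := .of_algebraMap_eq fun _ => rfl
  exact hR.exists_algHom_of_isGalois M K L Ω (S := integralClosure R W) (W := W)

variable (M K L Ω) in
theorem exists_intermediateField (hR : HilbertSpecialization k R) [Algebra.IsIntegral R A]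
    [FiniteDimensional K L] [Algebra.IsSeparable K L] [Algebra.FiniteType k A] :
    ∃ (F : IntermediateField k Ω) (ι : A →ₐ[M] Ω), FiniteDimensional k F ∧
      Algebra.IsSeparable k F ∧ (∀ x, x ∈ F ↔ ∃ a, ι a = x) ∧
      ∃ β : (F ≃ₐ[k] F) ≃* (A ≃ₐ[R] A),
        ∀ (τ : F ≃ₐ[k] F) (x : F) (a : A), ι a = x → ι (β τ a) = τ x := by
  obtain ⟨ι, hsep, hβ⟩ := hR.exists_algHom (A := A) M K L Ω
  let B : Subalgebra k Ω := (ι.restrictScalars k).range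
  have halg : B.IsAlgebraic := fun x hx => by
    obtain ⟨a, rfl⟩ := hx
    exact (hsep a).isIntegral.isAlgebraic
  let F : IntermediateField k Ω := halg.toIntermediateField
  have hF (x : Ω) : x ∈ F ↔ ∃ a, ι a = x := Iff.rfl
  have : Algebra.IsIntegral k B := ⟨fun x => by
    obtain ⟨a, ha⟩ := x.2
    rw [← isIntegral_algebraMap_iff (FaithfulSMul.algebraMap_injective B Ω)]
    exact (congrArg (IsIntegral k) ha).mp (hsep a).isIntegral⟩
  have : Algebra.FiniteType k B := .of_surjective _ (ι.restrictScalars k).rangeRestrict_surjective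
  have : FiniteDimensional k F := Algebra.IsIntegral.finite (R := k) (A := B)
  have : Algebra.IsSeparable k F := (le_separableClosure_iff k Ω F).1 fun x hx => by
    obtain ⟨a, rfl⟩ := (hF x).1 hx
    exact hsep a
  exact ⟨F, ι, ‹_›, ‹_›, hF, hβ F hF⟩

end HilbertSpecialization

section SimpleRootClosed

/-- A subalgebra `S` of `A` is *closed under simple roots* if it contains every simple root in `A`
of a monic polynomial with coefficients in `S`.  Elements generated from `R` by adjoining simple
roots are integral over `R` and separable over its fraction field. -/
def IsSimpleRootClosed {R A : Type*} [CommRing R] [CommRing A] [Algebra R A]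
    (S : Subalgebra R A) : Prop :=
  ∀ P : A[X], P.Monic → (∀ n, P.coeff n ∈ S) → ∀ a : A, P.eval a = 0 →
    (derivative P).eval a ≠ 0 → a ∈ S

theorem IsSimpleRootClosed.mem_of_isSeparable {k A : Type*} [Field k] [CommRing A] [Nontrivial A]
    [Algebra k A] {S : Subalgebra k A} (hS : IsSimpleRootClosed S) {a : A}
    (ha : IsSeparable k a) : a ∈ S := by
  refine hS ((minpoly k a).map (algebraMap k A)) ((minpoly.monic ha.isIntegral).map _)
    (fun n => ?_) a ?_ ?_
  · rw [coeff_map]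
    exact S.algebraMap_mem _
  · rw [eval_map_algebraMap, minpoly.aeval]
  · rw [derivative_map, eval_map_algebraMap]
    exact ha.aeval_derivative_ne_zero (minpoly.aeval k a)

theorem IsSimpleRootClosed.comap {R A B : Type*} [CommRing R] [CommRing A] [CommRing B]
    [Algebra R A] [Algebra R B] {S : Subalgebra R B} (hS : IsSimpleRootClosed S) {f : A →ₐ[R] B}
    (hf : Function.Injective f) : IsSimpleRootClosed (S.comap f) := by
  intro P hP hcoeff a hroot hder
  refine hS (P.map (f : A →+* B)) (hP.map _) (fun n => ?_) (f a) ?_ ?_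
  · rw [coeff_map]
    exact hcoeff n
  · exact (eval_map_apply (f : A →+* B) a).trans <| by rw [hroot, map_zero]
  · rw [derivative_map]
    exact (eval_map_apply (f : A →+* B) a).trans_ne <| (map_ne_zero_iff f hf).2 hder

theorem exists_monic_map_eq_of_coeff_mem {R A : Type*} [CommRing R] [CommRing A] [Algebra R A]
    {S : Subalgebra R A} {P : A[X]} (hP : P.Monic) (hcoeff : ∀ n, P.coeff n ∈ S) :
    ∃ Q : S[X], Q.Monic ∧ Q.map (algebraMap S A) = P := by
  obtain ⟨Q, hQP, -, hQ⟩ := lifts_and_natDegree_eq_and_monic (f := algebraMap S A)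
    ((lifts_iff_coeff_lifts P).2 fun n => ⟨⟨_, hcoeff n⟩, rfl⟩) hP
  exact ⟨Q, hQ, hQP⟩

theorem isSimpleRootClosed_integralClosure (R A : Type*) [CommRing R] [CommRing A] [Algebra R A] :
    IsSimpleRootClosed (integralClosure R A) := by
  intro P hP hcoeff a hroot _
  obtain ⟨Q, hQ, rfl⟩ := exists_monic_map_eq_of_coeff_mem hP hcoeff
  exact isIntegral_trans (A := integralClosure R A) a ⟨Q, hQ, by rwa [eval_map] at hroot⟩

theorem isSimpleRootClosed_separableClosure (K L : Type*) [Field K] [Field L] [Algebra K L] :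
    IsSimpleRootClosed (separableClosure K L).toSubalgebra := by
  intro P hP hcoeff a hroot hder
  obtain ⟨Q, hQ, rfl⟩ := exists_monic_map_eq_of_coeff_mem hP hcoeff
  change (Polynomial (separableClosure K L)) at Q
  change Q.Monic at hQ
  have hroot : aeval a Q = 0 := (eval_map_algebraMap Q a).symm.trans hroot
  refine mem_separableClosure_iff.2 (IsSeparable.of_algebra_isSeparable_of_isSeparable K
    (E := separableClosure K L) ?_)
  rw [IsSeparable, separable_iff_derivative_ne_zero (minpoly.irreducible ⟨Q, hQ, hroot⟩)]
  intro h
  obtain ⟨g, rfl⟩ := minpoly.dvd _ a hroot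
  apply hder
  rw [derivative_map]
  refine (eval_map_algebraMap _ a).trans ?_
  simp [derivative_mul, h]

end SimpleRootClosed

section Adjoin

variable {k A : Type*} [Field k] [CommRing A] [Algebra k A]

theorem exists_monoidHom_algEquiv_adjoin {G ι : Type*} [Group G] {f : ι → A} (Φ : G →* (A ≃ₐ[k] A))
    (hΦ : ∀ g i, Φ g (f i) = f i) :
    ∃ Ψ : G →* (A ≃ₐ[Algebra.adjoin k (Set.range f)] A), ∀ g a, Ψ g a = Φ g a := by
  let : MulSemiringAction G A := .compHom A Φ
  have hfix (g : G) : Algebra.adjoin k (Set.range f) ≤ AlgHom.equalizer (Φ g) (.id k A) :=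
    Algebra.adjoin_le (Set.range_subset_iff.2 (hΦ g))
  have : SMulCommClass G (Algebra.adjoin k (Set.range f)) A := ⟨fun g r a =>
    (map_mul (Φ g) (r : A) a).trans (congrArg (· * Φ g a) (hfix g r.2))⟩
  exact ⟨MulSemiringAction.toAlgAut G _ A, fun _ _ => rfl⟩

theorem algebraicIndependent_of_isIntegral_adjoin {n : ℕ} {f : Fin n → A} [IsDomain A]
    (hn : n ≤ Algebra.trdeg k A) [Algebra.IsIntegral (Algebra.adjoin k (Set.range f)) A] :
    AlgebraicIndependent k f :=
  (Algebra.IsAlgebraic.isTranscendenceBasis_of_lift_le_trdeg_of_finite k f (by simpa using hn)).1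

theorem HilbertSpecialization.adjoin_range {k : Type} [Field k] [Algebra k A]
    (hk : IsHilbertianField k) {n : ℕ} (hn : 0 < n) {f : Fin n → A}
    (hf : AlgebraicIndependent k f) :
    HilbertSpecialization k (Algebra.adjoin k (Set.range f)) :=
  (HilbertSpecialization.mvPolynomial hk hn).of_algEquiv hf.aevalEquiv

end Adjoin

namespace IsHilbertianField

theorem exists_intermediateField {k : Type} {M A : Type*} [Field k] (hk : IsHilbertianField k)
    [Field M] [CommRing A] [IsDomain A] [IsIntegrallyClosed A] [Algebra k M] [Algebra k A]
    [Algebra M A] [IsScalarTower k M A] [Algebra.FiniteType k A]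
    (Ω : Type*) [Field Ω] [Algebra k Ω] [Algebra M Ω] [IsScalarTower k M Ω] [IsAlgClosure k Ω]
    {n : ℕ} (hn : 0 < n) (htr : n ≤ Algebra.trdeg k A) {f : Fin n → A}
    (hf : ∀ S : Subalgebra k A, IsSimpleRootClosed S → (∀ i, f i ∈ S) → S = ⊤) :
    ∃ (F : IntermediateField k Ω) (ι : A →ₐ[M] Ω), FiniteDimensional k F ∧
      Algebra.IsSeparable k F ∧ (∀ x, x ∈ F ↔ ∃ a, ι a = x) ∧
      ∃ β : (F ≃ₐ[k] F) ≃* (A ≃ₐ[Algebra.adjoin k (Set.range f)] A),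
        ∀ (τ : F ≃ₐ[k] F) (x : F) (a : A), ι a = x → ι (β τ a) = τ x := by
  let R := Algebra.adjoin k (Set.range f)
  have hmem (T : Subalgebra R A) (hT : IsSimpleRootClosed T) (a : A) : a ∈ T := by
    have htop := hf (T.restrictScalars k) hT fun i =>
      T.algebraMap_mem ⟨f i, Algebra.subset_adjoin (Set.mem_range_self i)⟩
    exact htop.ge Algebra.mem_top
  have : Algebra.IsIntegral R A := ⟨hmem _ (isSimpleRootClosed_integralClosure R A)⟩
  have hind : AlgebraicIndependent k f := algebraicIndependent_of_isIntegral_adjoin htr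
  have : IsIntegrallyClosed R := .of_equiv hind.aevalEquiv.toRingEquiv
  have : Algebra.FiniteType R A := .of_restrictScalars_finiteType k R A
  have : Module.Finite R A := Algebra.IsIntegral.finite
  let K := FractionRing R
  let L := FractionRing A
  let : Algebra K L := FractionRing.liftAlgebra R L
  have : IsScalarTower R K L := FractionRing.isScalarTower_liftAlgebra R L
  have hsep (a : A) : algebraMap A L a ∈ separableClosure K L :=
    hmem (((separableClosure K L).toSubalgebra.restrictScalars R).comap
      (IsScalarTower.toAlgHom R A L)) (IsSimpleRootClosed.comap
        (S := (separableClosure K L).toSubalgebra.restrictScalars R)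
        (isSimpleRootClosed_separableClosure K L) (IsFractionRing.injective A L)) a
  have : Algebra.IsSeparable K L := ⟨fun x => by
    obtain ⟨a, b, -, rfl⟩ := IsFractionRing.div_surjective (A := A) x
    exact mem_separableClosure_iff.1 (div_mem (hsep a) (hsep b))⟩
  exact (HilbertSpecialization.adjoin_range hk hn hind).exists_intermediateField M K L Ω

end IsHilbertianField

section Nodal

open Lagrange

theorem eval_derivative_nodal_ne_zero {A ι : Type*} [CommRing A] [IsDomain A] {s : Finset ι}
    {v : ι → A} (hv : Set.InjOn v s) {i : ι} (hi : i ∈ s) :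
    (derivative (nodal s v)).eval (v i) ≠ 0 := by
  classical
  rw [eval_nodal_derivative_eval_node_eq hi, eval_nodal]
  exact Finset.prod_ne_zero_iff.2 fun j hj => sub_ne_zero.2 fun h =>
    Finset.ne_of_mem_erase hj (hv (Finset.mem_of_mem_erase hj) hi h.symm)

theorem IsSimpleRootClosed.mem_of_coeff_nodal_mem {R A ι : Type*} [CommRing R] [CommRing A]
    [IsDomain A] [Algebra R A] {S : Subalgebra R A} (hS : IsSimpleRootClosed S) {s : Finset ι}
    {v : ι → A} (hv : Set.InjOn v s) (hcoeff : ∀ n < s.card, (nodal s v).coeff n ∈ S) {i : ι}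
    (hi : i ∈ s) : v i ∈ S := by
  refine hS (nodal s v) nodal_monic (fun n => ?_) _ (eval_nodal_at_node hi)
    (eval_derivative_nodal_ne_zero hv hi)
  rcases lt_trichotomy n s.card with hn | rfl | hn
  · exact hcoeff n hn
  · rw [← natDegree_nodal (s := s) (v := v), coeff_natDegree, nodal_monic.leadingCoeff]
    exact S.one_mem
  · rw [coeff_eq_zero_of_natDegree_lt (natDegree_nodal.trans_lt hn)]
    exact S.zero_mem

end Nodal

section MvPolynomialAction

variable {k G L σ : Type*} [Field k] [Field L] [Algebra k L] [Group G] [MulAction G σ]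

theorem mvPolynomial_algEquiv_ext {e e' : MvPolynomial σ L ≃ₐ[k] MvPolynomial σ L}
    (hC : ∀ x, e (MvPolynomial.C x) = e' (MvPolynomial.C x))
    (hX : ∀ i, e (MvPolynomial.X i) = e' (MvPolynomial.X i)) : e = e' :=
  AlgEquiv.ext fun p => DFunLike.congr_fun
    (MvPolynomial.ringHom_ext (f := (e : MvPolynomial σ L →+* MvPolynomial σ L))
      (g := (e' : MvPolynomial σ L →+* MvPolynomial σ L)) hC hX) p

variable (σ) in
/-- The semilinear action of `G` on `L[X_s | s ∈ σ]`, through `α` on the coefficients and by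
permuting the variables. -/
noncomputable def semilinearRename (α : G →* (L ≃ₐ[k] L)) :
    G →* (MvPolynomial σ L ≃ₐ[k] MvPolynomial σ L) where
  toFun g := (MvPolynomial.mapAlgEquiv σ (α g)).trans
    ((MvPolynomial.renameEquiv L (MulAction.toPerm g)).restrictScalars k)
  map_one' := mvPolynomial_algEquiv_ext (by simp) (by simp)
  map_mul' g h := mvPolynomial_algEquiv_ext (by simp) (by simp [mul_smul])

variable (α : G →* (L ≃ₐ[k] L)) (g : G)

theorem semilinearRename_C (x : L) :
    semilinearRename σ α g (MvPolynomial.C x) = MvPolynomial.C (α g x) := by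
  simp [semilinearRename]

theorem semilinearRename_X (i : σ) :
    semilinearRename σ α g (MvPolynomial.X i) = MvPolynomial.X (g • i) := by
  simp [semilinearRename]

theorem semilinearRename_coeff_nodal [Fintype σ] (n : ℕ) :
    semilinearRename σ α g ((Lagrange.nodal Finset.univ MvPolynomial.X).coeff n) =
      (Lagrange.nodal Finset.univ (MvPolynomial.X : σ → MvPolynomial σ L)).coeff n := by
  have hmap : (Lagrange.nodal Finset.univ (MvPolynomial.X : σ → MvPolynomial σ L)).map
      (semilinearRename σ α g : MvPolynomial σ L →+* MvPolynomial σ L) =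
      Lagrange.nodal Finset.univ MvPolynomial.X := by
    simp only [Lagrange.nodal_eq, Polynomial.map_prod, Polynomial.map_sub, map_X, map_C,
      RingHom.coe_coe, semilinearRename_X]
    exact Fintype.prod_equiv (MulAction.toPerm g) _ _ fun i => rfl
  conv_rhs => rw [← hmap, coeff_map]
  rfl

variable (k σ L) in
theorem card_le_trdeg_mvPolynomial [Fintype σ] :
    Fintype.card σ ≤ Algebra.trdeg k (MvPolynomial σ L) := by
  have hind : AlgebraicIndependent k (MvPolynomial.X : σ → MvPolynomial σ L) :=
    (MvPolynomial.algebraicIndependent_X σ L).restrictScalars (algebraMap k L).injective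
  simpa using hind.lift_cardinalMk_le_trdeg

theorem eq_top_of_isSimpleRootClosed_of_coeff_nodal_mem [Algebra.IsSeparable k L] [Fintype σ]
    {S : Subalgebra k (MvPolynomial σ L)} (hS : IsSimpleRootClosed S)
    (hcoeff : ∀ n < Fintype.card σ, (Lagrange.nodal Finset.univ MvPolynomial.X).coeff n ∈ S) :
    S = ⊤ := by
  have hC (x : L) : MvPolynomial.C x ∈ S := hS.mem_of_isSeparable <|
    (Algebra.IsSeparable.isSeparable k x).map (IsScalarTower.toAlgHom k L (MvPolynomial σ L))
      (MvPolynomial.C_injective σ L)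
  refine eq_top_iff.2 fun p _ => ?_
  induction p using MvPolynomial.induction_on with
  | C x => exact hC x
  | add p q hp hq => exact S.add_mem (hp trivial) (hq trivial)
  | mul_X p i hp => exact S.mul_mem (hp trivial) <|
      hS.mem_of_coeff_nodal_mem (MvPolynomial.X_injective.injOn) hcoeff (Finset.mem_univ i)

end MvPolynomialAction

theorem IsHilbertianField.exists_injective_monoidHom {k : Type} {G L : Type*} [Field k]
    (hk : IsHilbertianField k) [Group G] [Finite G] [Field L] [Algebra k L] [FiniteDimensional k L]
    [Algebra.IsSeparable k L] (Ω : Type*) [Field Ω] [Algebra k Ω] [Algebra L Ω]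
    [IsScalarTower k L Ω] [IsAlgClosure k Ω] (α : G →* (L ≃ₐ[k] L)) :
    ∃ M : IntermediateField k Ω, FiniteDimensional k M ∧ Algebra.IsSeparable k M ∧
      ∃ (i : L →ₐ[k] M) (j : G →* (M ≃ₐ[k] M)), Function.Injective j ∧
        (∀ x, (i x : Ω) = algebraMap L Ω x) ∧ ∀ g x, j g (i x) = i (α g x) := by
  have := Fintype.ofFinite G
  let f (n : Fin (Fintype.card G)) : MvPolynomial G L :=
    (Lagrange.nodal Finset.univ MvPolynomial.X).coeff n
  obtain ⟨M, ι, hfin, hsep, hM, β, hβ⟩ := hk.exists_intermediateField (M := L) Ω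
    Fintype.card_pos (card_le_trdeg_mvPolynomial k L G) (f := f) fun S hS hcoeff =>
      eq_top_of_isSimpleRootClosed_of_coeff_nodal_mem hS fun n hn => hcoeff ⟨n, hn⟩
  obtain ⟨Ψ, hΨ⟩ := exists_monoidHom_algEquiv_adjoin (f := f) (semilinearRename G α)
    fun g n => semilinearRename_coeff_nodal α g n
  have hι (x : L) : ι (MvPolynomial.C x) = algebraMap L Ω x := ι.commutes x
  let i : L →ₐ[k] M := (IsScalarTower.toAlgHom k L Ω).codRestrict M.toSubalgebra
    fun x => (hM _).2 ⟨_, hι x⟩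
  refine ⟨M, hfin, hsep, i, β.symm.toMonoidHom.comp Ψ, β.symm.injective.comp fun g h hgh => ?_,
    fun x => rfl, fun g x => Subtype.ext ?_⟩
  · have hX : Ψ g (MvPolynomial.X 1) = Ψ h (MvPolynomial.X 1) := by rw [hgh]
    simpa [hΨ, semilinearRename_X] using hX
  · have hx := hβ (β.symm (Ψ g)) (i x) (MvPolynomial.C x) (hι x)
    rw [MulEquiv.apply_symm_apply, hΨ, semilinearRename_C, hι] at hx
    exact hx.symm

section RigidCubic

theorem eq_zero_and_eq_zero_of_cube_add_X_mul_sub_C_eq_zero {R : Type*} [CommRing R] [IsDomain R]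
    {b : R[X]} {δ : R} (h : b ^ 3 + X * (b - C δ) = 0) : b = 0 ∧ δ = 0 := by
  obtain ⟨c, rfl⟩ : X ∣ b := prime_X.dvd_of_dvd_pow (n := 3) ⟨-(b - C δ), by linear_combination h⟩
  have hc : X ^ 2 * c ^ 3 + X * c - C δ = 0 :=
    (mul_eq_zero.1 (by linear_combination h : X * (X ^ 2 * c ^ 3 + X * c - C δ) = 0)).resolve_left
      X_ne_zero
  obtain rfl : δ = 0 := by simpa using congrArg (eval 0) hc
  have hfactor : X * (c * (X * c ^ 2 + 1)) = 0 := by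
    simp only [map_zero] at hc
    linear_combination hc
  have hunit : X * c ^ 2 + 1 ≠ 0 := fun h0 => by simpa using congrArg (eval 0) h0
  have hc0 : c = 0 := by simpa [X_ne_zero, hunit] using hfactor
  exact ⟨by rw [hc0, mul_zero], rfl⟩

/-- The cubic `X³ + Y(X - θ)`, encoded as a polynomial in `X` over `M[Y]`.  The extension of
`k(Y, rigidCubic θ)` obtained by adjoining `M` and `X` has no automorphism moving `X` or `θ`. -/
noncomputable def rigidCubic {M : Type*} [CommRing M] (θ : M) : M[X][X] :=
  X ^ 3 + C X * (X - C (C θ))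

theorem eq_X_and_eq_of_cube_add_eq_rigidCubic {M : Type*} [CommRing M] [IsDomain M] {w : M[X][X]}
    {θ θ' : M} (h : w ^ 3 + C X * (w - C (C θ')) = rigidCubic θ) : w = X ∧ θ' = θ := by
  have hrel : w ^ 3 - X ^ 3 + C X * (w - X - C (C (θ' - θ))) = 0 := by
    rw [rigidCubic] at h
    rw [map_sub, map_sub]
    linear_combination h
  have hcoeff : w.coeff 0 ^ 3 + X * (w.coeff 0 - C (θ' - θ)) = 0 := by
    simpa [coeff_zero_eq_eval_zero] using congrArg (eval 0) hrel
  obtain ⟨hw, hθ⟩ := eq_zero_and_eq_zero_of_cube_add_X_mul_sub_C_eq_zero hcoeff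
  have hfactor : (w - X) * (w ^ 2 + w * X + X ^ 2 + C X) = 0 := by
    simp only [hθ, map_zero] at hrel
    linear_combination hrel
  have hne : w ^ 2 + w * X + X ^ 2 + C X ≠ 0 := fun h0 => by
    simpa [← coeff_zero_eq_eval_zero, hw] using congrArg (eval 0) h0
  exact ⟨sub_eq_zero.1 ((mul_eq_zero.1 hfactor).resolve_right hne), sub_eq_zero.1 hθ⟩

theorem two_le_trdeg_polynomial_polynomial (k M : Type*) [Field k] [CommRing M] [IsDomain M]
    [Algebra k M] : 2 ≤ Algebra.trdeg k M[X][X] := by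
  rw [← trdeg_add_eq k M (A := M[X][X]), ← trdeg_add_eq M M[X] (A := M[X][X]), trdeg_of_isDomain,
    trdeg_of_isDomain, one_add_one_eq_two]
  exact self_le_add_left 2 _

theorem polynomial_polynomial_subalgebra_eq_top {k M : Type*} [CommSemiring k] [CommSemiring M]
    [Algebra k M] {S : Subalgebra k M[X][X]} (hM : ∀ m, C (C m) ∈ S) (hC : C X ∈ S) (hX : X ∈ S) :
    S = ⊤ := by
  have hcoeff (p : M[X]) : C p ∈ S := by
    induction p using Polynomial.induction_on' with
    | add p q hp hq => simpa only [C_add] using add_mem hp hq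
    | monomial n m =>
      rw [← C_mul_X_pow_eq_monomial, C_mul, C_pow]
      exact mul_mem (hM m) (pow_mem hC n)
  refine eq_top_iff.2 fun a _ => ?_
  induction a using Polynomial.induction_on' with
  | add p q hp hq => exact add_mem (hp trivial) (hq trivial)
  | monomial n p =>
    rw [← C_mul_X_pow_eq_monomial]
    exact mul_mem (hcoeff p) (pow_mem hX n)

variable {k M : Type*} [Field k] [Field M] [Algebra k M]

theorem IsSimpleRootClosed.eq_top_of_rigidCubic_mem [Algebra.IsSeparable k M]
    {S : Subalgebra k M[X][X]} (hS : IsSimpleRootClosed S) {θ : M} (hY : C X ∈ S)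
    (hZ : rigidCubic θ ∈ S) : S = ⊤ := by
  have hM (m : M) : C (C m) ∈ S :=
    hS.mem_of_isSeparable <| (Algebra.IsSeparable.isSeparable k m).map
      (IsScalarTower.toAlgHom k M M[X][X]) ((C_injective).comp C_injective)
  refine polynomial_polynomial_subalgebra_eq_top hM hY ?_
  let P : M[X][X][X] := X ^ 3 + C (C X) * X + C (-(C X * C (C θ)) - rigidCubic θ)
  have hP : P.Monic := by unfold P; monicity!
  refine hS P hP (fun n => ?_) X ?_ ?_
  · simp only [P, coeff_add, coeff_X_pow, coeff_C_mul, coeff_X, coeff_C]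
    refine add_mem (add_mem ?_ (mul_mem hY ?_)) ?_ <;> split_ifs
    exacts [one_mem S, zero_mem S, one_mem S, zero_mem S,
      sub_mem (neg_mem (mul_mem hY (hM θ))) hZ, zero_mem S]
  · simp [P, rigidCubic]
    ring
  · intro h
    simpa [P] using congrArg (fun p : M[X][X] => (p.coeff 0)) h

end RigidCubic

section Automorphisms

variable {k M G : Type*} [Field k] [Field M] [Algebra k M] [Group G]

theorem exists_apply_eq_self_iff_mem [FiniteDimensional k M] [Algebra.IsSeparable k M]
    (H : Subgroup (M ≃ₐ[k] M)) : ∃ θ : M, ∀ σ : M ≃ₐ[k] M, σ θ = θ ↔ σ ∈ H := by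
  obtain ⟨θ, hθ⟩ := Field.exists_primitive_element k (IntermediateField.fixedField H)
  refine ⟨θ, fun σ => ⟨fun h => ?_, fun h => θ.2 ⟨σ, h⟩⟩⟩
  have hadjoin : IntermediateField.fixedField H = IntermediateField.adjoin k {(θ : M)} := by
    rw [← IntermediateField.lift_adjoin_simple, hθ, IntermediateField.lift_top]
  have hσ : (σ : M →ₐ[k] M).comp (IntermediateField.fixedField H).val =
      (IntermediateField.fixedField H).val :=
    IntermediateField.algHom_ext_of_eq_adjoin k hadjoin <| by simpa using h
  rw [← IntermediateField.fixingSubgroup_fixedField H, IntermediateField.mem_fixingSubgroup_iff]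
  exact fun x hx => congrArg (· ⟨x, hx⟩) hσ

theorem exists_algHom_C_eq {R A : Type*} [CommSemiring R] [CommRing A] [IsDomain A] [Algebra R M]
    [Algebra R A] (α : M →ₐ[R] A[X]) : ∃ τ : M →ₐ[R] A, ∀ m, C (τ m) = α m := by
  refine ⟨((aeval (0 : A)).restrictScalars R).comp α, fun m => ?_⟩
  rcases eq_or_ne m 0 with rfl | hm
  · simp
  · obtain ⟨a, -, ha⟩ := isUnit_iff.1 (hm.isUnit.map α)
    simp [← ha]

/-- The action of `k`-automorphisms of `A` on the coefficients of polynomials over `A`. -/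
noncomputable def polynomialAut (R A : Type*) [CommSemiring R] [CommSemiring A] [Algebra R A] :
    (A ≃ₐ[R] A) →* (A[X] ≃ₐ[R] A[X]) where
  toFun := mapAlgEquiv
  map_one' := mapAlgEquiv_id
  map_mul' σ τ := (mapAlgEquiv_comp _ τ σ).symm

theorem polynomialAut_C {R A : Type*} [CommSemiring R] [CommSemiring A] [Algebra R A]
    (σ : A ≃ₐ[R] A) (a : A) : polynomialAut R A σ (C a) = C (σ a) :=
  map_C _

theorem polynomialAut_X {R A : Type*} [CommSemiring R] [CommSemiring A] [Algebra R A]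
    (σ : A ≃ₐ[R] A) : polynomialAut R A σ X = X :=
  map_X _

theorem apply_X_and_exists_algEquiv_of_apply_rigidCubic [Algebra.IsAlgebraic k M]
    {σ : M[X][X] ≃ₐ[k] M[X][X]} {θ : M} (hY : σ (C X) = C X)
    (hZ : σ (rigidCubic θ) = rigidCubic θ) :
    σ X = X ∧ ∃ τ : M ≃ₐ[k] M, τ θ = θ ∧ ∀ m, σ (C (C m)) = C (C (τ m)) := by
  obtain ⟨τ₁, hτ₁⟩ := exists_algHom_C_eq
    ((σ : M[X][X] →ₐ[k] M[X][X]).comp (IsScalarTower.toAlgHom k M M[X][X]))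
  obtain ⟨τ, hτ⟩ := exists_algHom_C_eq τ₁
  have hC (m : M) : σ (C (C m)) = C (C (τ m)) := by
    rw [hτ, hτ₁]
    rfl
  have hcubic : σ X ^ 3 + C X * (σ X - C (C (τ θ))) = rigidCubic θ := by
    rw [← hZ, rigidCubic, map_add, map_pow, map_mul, map_sub, hY, hC]
  obtain ⟨hX, hθ⟩ := eq_X_and_eq_of_cube_add_eq_rigidCubic hcubic
  exact ⟨hX, .ofBijective τ (Algebra.IsAlgebraic.algHom_bijective τ), hθ, hC⟩

theorem exists_mulEquiv_algEquiv_adjoin_rigidCubic [Algebra.IsAlgebraic k M]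
    {j : G →* (M ≃ₐ[k] M)} (hj : Function.Injective j) {θ : M}
    (hθ : ∀ σ : M ≃ₐ[k] M, σ θ = θ ↔ σ ∈ j.range) :
    ∃ Ψ : G ≃* (M[X][X] ≃ₐ[Algebra.adjoin k (Set.range ![C X, rigidCubic θ])] M[X][X]),
      ∀ g m, Ψ g (C (C m)) = C (C (j g m)) := by
  obtain ⟨Ψ, hΨ⟩ := exists_monoidHom_algEquiv_adjoin (f := ![C X, rigidCubic θ])
    ((polynomialAut k M[X]).comp ((polynomialAut k M).comp j)) fun g i => by
      have hg : j g θ = θ := (hθ _).2 ⟨g, rfl⟩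
      fin_cases i <;> simp [rigidCubic, polynomialAut_C, polynomialAut_X, hg]
  have hC (g : G) (m : M) : Ψ g (C (C m)) = C (C (j g m)) := by
    simp [hΨ, polynomialAut_C]
  have hX (g : G) : Ψ g X = X := by
    simp [hΨ, polynomialAut_X]
  have hfix (σ : M[X][X] ≃ₐ[Algebra.adjoin k (Set.range ![C X, rigidCubic θ])] M[X][X])
      (i : Fin 2) : σ (![C X, rigidCubic θ] i) = ![C X, rigidCubic θ] i :=
    σ.commutes ⟨_, Algebra.subset_adjoin (Set.mem_range_self i)⟩
  refine ⟨MulEquiv.ofBijective Ψ ⟨fun g h hgh => hj (AlgEquiv.ext fun m => ?_), fun σ => ?_⟩, hC⟩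
  · exact C_injective (C_injective (by rw [← hC, ← hC, hgh]))
  · obtain ⟨hσX, τ, hτθ, hτ⟩ := apply_X_and_exists_algEquiv_of_apply_rigidCubic
      (σ := σ.restrictScalars k) (hfix σ 0) (hfix σ 1)
    obtain ⟨g, rfl⟩ := (hθ τ).1 hτθ
    have htop := polynomial_polynomial_subalgebra_eq_top
      (S := AlgHom.equalizer ((Ψ g).toAlgHom.restrictScalars k) (σ.toAlgHom.restrictScalars k))
      (fun m => (hC g m).trans (hτ m).symm) ((hfix (Ψ g) 0).trans (hfix σ 0).symm)
      ((hX g).trans hσX.symm)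
    exact ⟨g, AlgEquiv.ext fun a => htop.ge (Algebra.mem_top (x := a))⟩

end Automorphisms

theorem IsHilbertianField.exists_mulEquiv {k : Type} {G M : Type*} [Field k]
    (hk : IsHilbertianField k) [Group G] [Field M] [Algebra k M] [FiniteDimensional k M]
    [Algebra.IsSeparable k M] (Ω : Type*) [Field Ω] [Algebra k Ω] [Algebra M Ω]
    [IsScalarTower k M Ω] [IsAlgClosure k Ω] {j : G →* (M ≃ₐ[k] M)} (hj : Function.Injective j) :
    ∃ F : IntermediateField k Ω, FiniteDimensional k F ∧ Algebra.IsSeparable k F ∧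
      ∃ (i : M →ₐ[k] F) (β : (F ≃ₐ[k] F) ≃* G),
        (∀ x, (i x : Ω) = algebraMap M Ω x) ∧ ∀ τ x, τ (i x) = i (j (β τ) x) := by
  obtain ⟨θ, hθ⟩ := exists_apply_eq_self_iff_mem j.range
  obtain ⟨Ψ, hΨ⟩ := exists_mulEquiv_algEquiv_adjoin_rigidCubic hj hθ
  have : Algebra.FiniteType k M[X][X] := .trans (S := M) inferInstance inferInstance
  obtain ⟨F, ι, hfin, hsep, hF, β, hβ⟩ := hk.exists_intermediateField (M := M) (A := M[X][X]) Ω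
    two_pos (two_le_trdeg_polynomial_polynomial k M) (f := ![C X, rigidCubic θ])
    fun S hS hmem => hS.eq_top_of_rigidCubic_mem (hmem 0) (hmem 1)
  have hι (x : M) : ι (C (C x)) = algebraMap M Ω x := ι.commutes x
  let i : M →ₐ[k] F := (IsScalarTower.toAlgHom k M Ω).codRestrict F.toSubalgebra
    fun x => (hF _).2 ⟨_, hι x⟩
  refine ⟨F, hfin, hsep, i, β.trans Ψ.symm, fun x => rfl, fun τ x => Subtype.ext ?_⟩
  have hx := hβ τ (i x) (C (C x)) (hι x)
  rw [← Ψ.apply_symm_apply (β τ), hΨ, hι] at hx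
  exact hx.symm

theorem statement_3_general {k : Type} [Field k] (hk : IsHilbertianField k) {G Ω : Type*} [Group G]
    [Finite G] [Field Ω] [Algebra k Ω] [IsAlgClosure k Ω] (L : IntermediateField k Ω)
    [FiniteDimensional k L] [Algebra.IsSeparable k L] (α : G →* (L ≃ₐ[k] L)) :
    ∃ (F : IntermediateField k Ω) (hLF : L ≤ F),
      FiniteDimensional L (IntermediateField.extendScalars hLF) ∧
      Algebra.IsSeparable L (IntermediateField.extendScalars hLF) ∧
      ∃ β : (F ≃ₐ[k] F) ≃* G, ∀ (σ : F ≃ₐ[k] F) (x : Ω) (hx : x ∈ L),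
        ((σ ⟨x, hLF hx⟩ : F) : Ω) = ((α (β σ) ⟨x, hx⟩ : L) : Ω) := by
  obtain ⟨M, _, _, i, j, hj, hi, hij⟩ := hk.exists_injective_monoidHom Ω α
  obtain ⟨F, hfin, hsep, i', β, hi', hβ⟩ := hk.exists_mulEquiv Ω hj
  have hcomp (x : L) : (i' (i x) : Ω) = x := (hi' (i x)).trans (hi x)
  have hLF : L ≤ F := fun x hx => by simpa only [hcomp] using (i' (i ⟨x, hx⟩)).2
  have : FiniteDimensional k (IntermediateField.extendScalars hLF) := hfin
  have : Algebra.IsSeparable k (IntermediateField.extendScalars hLF) := hsep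
  refine ⟨F, hLF, FiniteDimensional.right k L _,
    Algebra.isSeparable_tower_top_of_isSeparable k L _, β, fun σ x hx => ?_⟩
  have hx' : (⟨x, hLF hx⟩ : F) = i' (i ⟨x, hx⟩) := Subtype.ext (hcomp ⟨x, hx⟩).symm
  rw [hx', hβ, hij, hcomp]

/-- **Corollary (split Galois embedding problems over Hilbertian fields, non-normal
solutions).**  Let `k` be a Hilbertian field, `L/k` a finite Galois extension (inside a
fixed algebraic closure), `G` a finite group and `α : G → Gal(L/k)` a surjective
homomorphism admitting a group-theoretic section.  Then there are a finite separable
extension `F` of `L` and an isomorphism `β : Aut(F/k) ≃ G` such that every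
`σ ∈ Aut(F/k)` maps `L` onto itself and `σ|_L = α (β σ)`. -/
theorem statement_3 (k : Type) [Field k] (hk : IsHilbertianField k)
    (G : Type) [Group G] [Finite G]
    (L : IntermediateField k (AlgebraicClosure k))
    [FiniteDimensional k L] [IsGalois k L]
    (α : G →* (L ≃ₐ[k] L)) (hα : Function.Surjective α)
    (α' : (L ≃ₐ[k] L) →* G) (hα' : Function.Injective α')
    (hsec : ∀ s : L ≃ₐ[k] L, α (α' s) = s) :
    ∃ (F : IntermediateField k (AlgebraicClosure k)) (hLF : L ≤ F),
      FiniteDimensional L (IntermediateField.extendScalars hLF) ∧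
      Algebra.IsSeparable L (IntermediateField.extendScalars hLF) ∧
      ∃ β : (F ≃ₐ[k] F) ≃* G,
        ∀ (σ : F ≃ₐ[k] F) (x : AlgebraicClosure k) (hx : x ∈ L),
          ((σ ⟨x, hLF hx⟩ : F) : AlgebraicClosure k) =
            ((α (β σ) ⟨x, hx⟩ : L) : AlgebraicClosure k) :=
  statement_3_general hk L α
end
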